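/- arXiv:1901.01605 — 10 statements merged into one kernel-verified Lean document; each statement's English description precedes it below -/
import Mathlib

section
/- For all integers s ≥ 1 and k ≥ 2, FP(s,k) > FP(s,k-1); that is, the minimum length of a functional k-PIR code of dimension s is strictly greater than the minimum length of a functional (k-1)-PIR code of dimension s. -/
/-! Deleting one column from a functional `(k + 1)`-PIR code leaves a functional `k`-PIR code:
the recovery sets of a request are pairwise disjoint, so at most one of them uses the deleted
column, and the other `k` survive (`IsFunctionalPIR.delete_column`). An optimal code has at least
one column, because the empty matrix recovers no nonzero vector and `1 ≤ s` supplies one. An optimal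
code exists because `k` copies of the identity matrix form a functional `k`-PIR code
(`exists_isFunctionalPIR`); this is where the infimum defining `FP` is known to be attained. -/

open scoped BigOperators

/-- `G` is a functional `k`-PIR code of dimension `s` and length `n`: for every nonzero
request `v : F_2^s` there are `k` pairwise disjoint sets of column indices, each of whose
columns sum to `v`. -/
def IsFunctionalPIR (s n k : ℕ) (G : Matrix (Fin s) (Fin n) (ZMod 2)) : Prop :=
  ∀ v : Fin s → ZMod 2, v ≠ 0 →
    ∃ R : Fin k → Finset (Fin n),
      (∀ j j' : Fin k, j ≠ j' → Disjoint (R j) (R j')) ∧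
      (∀ j : Fin k, ∀ i : Fin s, ∑ l ∈ R j, G i l = v i)

/-- `G` is a functional `k`-batch code of dimension `s` and length `n`: for every `k`-tuple of
nonzero requests there are `k` pairwise disjoint sets of column indices such that the columns
of the `j`-th set sum to the `j`-th request. -/
def IsFunctionalBatch (s n k : ℕ) (G : Matrix (Fin s) (Fin n) (ZMod 2)) : Prop :=
  ∀ v : Fin k → (Fin s → ZMod 2), (∀ j, v j ≠ 0) →
    ∃ R : Fin k → Finset (Fin n),
      (∀ j j' : Fin k, j ≠ j' → Disjoint (R j) (R j')) ∧
      (∀ j : Fin k, ∀ i : Fin s, ∑ l ∈ R j, G i l = v j i)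

/-- `FP s k` is the minimum length of a functional `k`-PIR code of dimension `s`. -/
noncomputable def FP (s k : ℕ) : ℕ :=
  sInf {n : ℕ | ∃ G : Matrix (Fin s) (Fin n) (ZMod 2), IsFunctionalPIR s n k G}

/-- `FB s k` is the minimum length of a functional `k`-batch code of dimension `s`. -/
noncomputable def FB (s k : ℕ) : ℕ :=
  sInf {n : ℕ | ∃ G : Matrix (Fin s) (Fin n) (ZMod 2), IsFunctionalBatch s n k G}

lemma exists_isFunctionalPIR (s k : ℕ) :
    ∃ G : Matrix (Fin s) (Fin (s * k)) (ZMod 2), IsFunctionalPIR s (s * k) k G := by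
  -- The pair `(i, j)` indexes the `i`-th unit vector in the `j`-th copy of the identity.
  let e : Fin s × Fin k ≃ Fin (s * k) := finProdFinEquiv
  refine ⟨fun i l => if (e.symm l).1 = i then 1 else 0, fun v _ =>
    ⟨fun j => Finset.univ.filter fun l => (e.symm l).2 = j ∧ v (e.symm l).1 = 1, ?_, ?_⟩⟩
  · intro j j' hj
    rw [Finset.disjoint_left]
    intro l hl hl'
    simp only [Finset.mem_filter] at hl hl'
    exact hj (hl.2.1.symm.trans hl'.2.1)
  · intro j i
    rw [Finset.sum_filter, ← Equiv.sum_comp e]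
    simp only [Equiv.symm_apply_apply]
    rw [Fintype.sum_prod_type, Finset.sum_eq_single i, Finset.sum_eq_single j]
    · have h : ∀ x : ZMod 2, (if x = 1 then (1 : ZMod 2) else 0) = x := by decide
      simpa using h (v i)
    · intro b _ hb
      simp [hb]
    · simp
    · intro b _ hb
      simp [hb]
    · simp

lemma IsFunctionalPIR.delete_column {s m k : ℕ} {G : Matrix (Fin s) (Fin (m + 1)) (ZMod 2)}
    (hG : IsFunctionalPIR s (m + 1) (k + 1) G) :
    IsFunctionalPIR s m k (fun i l => G i l.succ) := by
  intro v hv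
  obtain ⟨R, hdisj, hsum⟩ := hG v hv
  obtain ⟨j₀, hj₀⟩ : ∃ j₀, ∀ j, j ≠ j₀ → (0 : Fin (m + 1)) ∉ R j := by
    by_cases h : ∃ j₀, (0 : Fin (m + 1)) ∈ R j₀
    · obtain ⟨j₀, h0⟩ := h
      exact ⟨j₀, fun j hj hmem => Finset.disjoint_left.mp (hdisj j j₀ hj) hmem h0⟩
    · exact ⟨0, fun j _ hmem => h ⟨j, hmem⟩⟩
  refine ⟨fun j => Finset.univ.filter fun l => l.succ ∈ R (j₀.succAbove j), ?_, ?_⟩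
  · intro j j' hj
    rw [Finset.disjoint_left]
    intro l hl hl'
    simp only [Finset.mem_filter] at hl hl'
    exact Finset.disjoint_left.mp
      (hdisj _ _ (fun h => hj (Fin.succAbove_right_injective h))) hl.2 hl'.2
  · intro j i
    have h0 := hj₀ _ (Fin.succAbove_ne j₀ j)
    have hR : ∑ l ∈ R (j₀.succAbove j), G i l =
        ∑ l, if l ∈ R (j₀.succAbove j) then G i l else 0 := by
      rw [← Finset.sum_filter, Finset.filter_univ_mem]
    rw [← hsum (j₀.succAbove j) i, hR, Finset.sum_filter, Fin.sum_univ_succ, if_neg h0, zero_add]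

theorem FP_strict_mono (s k : ℕ) (hs : 1 ≤ s) (hk : 2 ≤ k) :
    FP s (k - 1) < FP s k := by
  obtain ⟨k, rfl⟩ : ∃ k', k = k' + 1 := ⟨k - 1, by omega⟩
  obtain ⟨G, hG⟩ : ∃ G : Matrix (Fin s) (Fin (FP s (k + 1))) (ZMod 2),
      IsFunctionalPIR s (FP s (k + 1)) (k + 1) G :=
    Nat.sInf_mem (s := {n : ℕ | ∃ G : Matrix (Fin s) (Fin n) (ZMod 2),
      IsFunctionalPIR s n (k + 1) G}) ⟨_, exists_isFunctionalPIR s (k + 1)⟩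
  generalize FP s (k + 1) = n at G hG ⊢
  cases n with
  | zero =>
    obtain ⟨R, -, hsum⟩ := hG (fun _ => 1) fun h => one_ne_zero (congrFun h ⟨0, hs⟩)
    have h := hsum 0 ⟨0, hs⟩
    rw [Finset.eq_empty_of_isEmpty (R 0), Finset.sum_empty] at h
    exact absurd h zero_ne_one
  | succ m => exact Nat.lt_succ_of_le (Nat.sInf_le ⟨_, hG.delete_column⟩)
end

section
/- For every integer s ≥ 1, FP(s,2) = s + 1. -/
/-!
The optimal code consists of the `s` unit vectors together with the all-ones vector. Its columns
sum to zero, so over `F_2` a set of columns and its complement have the same sum; the unit vectors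
indexed by the support of `v` and the complement of that set therefore serve the request `v` twice.

Conversely, sending a set of columns to its sum maps the `2 ^ n` subsets of the columns onto
`F_2 ^ s`. If `n ≤ s` this map is a bijection by counting, so the two recovery sets of a nonzero
request coincide; being disjoint they are empty, and the request would be zero.
-/

open scoped BigOperators

/-- The all-ones column (at index `0`) followed by the unit vectors. -/
def onesUnitMatrix (s : ℕ) : Matrix (Fin s) (Fin (s + 1)) (ZMod 2) :=
  fun i => Fin.cons 1 (fun m => if i = m then 1 else 0)

lemma onesUnitMatrix_isFunctionalPIR (s : ℕ) :
    IsFunctionalPIR s (s + 1) 2 (onesUnitMatrix s) := by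
  intro v _
  let S : Finset (Fin (s + 1)) :=
    (Finset.univ.filter fun m => v m = 1).map (Fin.succEmb s)
  have hS : ∀ i, ∑ l ∈ S, onesUnitMatrix s i l = v i := by
    intro i
    have h01 : ∀ x : ZMod 2, (if x = 1 then (1 : ZMod 2) else 0) = x := by decide
    simp [S, onesUnitMatrix, Finset.sum_map, h01]
  have htot : ∀ i, ∑ l, onesUnitMatrix s i l = 0 := by
    intro i
    have h11 : (1 : ZMod 2) + 1 = 0 := by decide
    simp [Fin.sum_univ_succ, onesUnitMatrix, h11]
  have hSc : ∀ i, ∑ l ∈ Sᶜ, onesUnitMatrix s i l = v i := by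
    intro i
    have h := Finset.sum_add_sum_compl S (onesUnitMatrix s i)
    rw [hS, htot, add_comm] at h
    rwa [CharTwo.add_eq_zero] at h
  refine ⟨![S, Sᶜ], ?_, ?_⟩
  · intro j j' h
    fin_cases j <;> fin_cases j' <;>
      simp_all [disjoint_compl_right, disjoint_compl_left]
  · intro j
    fin_cases j
    · exact hS
    · exact hSc

lemma IsFunctionalPIR.succ_le {s n : ℕ} (hs : 1 ≤ s) {G : Matrix (Fin s) (Fin n) (ZMod 2)}
    (hG : IsFunctionalPIR s n 2 G) : s + 1 ≤ n := by
  by_contra! hlt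
  let f : Finset (Fin n) → (Fin s → ZMod 2) := fun R i => ∑ l ∈ R, G i l
  have hsurj : Function.Surjective f := by
    intro v
    by_cases hv : v = 0
    · exact ⟨∅, by ext i; simp [f, hv]⟩
    · obtain ⟨R, -, hR⟩ := hG v hv
      exact ⟨R 0, funext (hR 0)⟩
  have hcard : Fintype.card (Finset (Fin n)) ≤ Fintype.card (Fin s → ZMod 2) := by
    simpa [ZMod.card] using Nat.pow_le_pow_right (n := 2) (by norm_num) (by omega : n ≤ s)
  have hbij : Function.Bijective f :=
    (Fintype.bijective_iff_surjective_and_card f).2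
      ⟨hsurj, le_antisymm hcard (Fintype.card_le_of_surjective f hsurj)⟩
  obtain ⟨R, hdisj, hR⟩ := hG (fun _ => 1) fun h => by
    simpa using congrFun h ⟨0, hs⟩
  have heq : R 0 = R 1 := hbij.1 ((funext (hR 0)).trans (funext (hR 1)).symm)
  have hd := hdisj 0 1 (by decide)
  rw [← heq, disjoint_self] at hd
  simpa [hd] using hR 0 ⟨0, hs⟩

theorem FP_two (s : ℕ) (hs : 1 ≤ s) :
    FP s 2 = s + 1 := by
  have hmem : s + 1 ∈ {n : ℕ | ∃ G : Matrix (Fin s) (Fin n) (ZMod 2), IsFunctionalPIR s n 2 G} :=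
    ⟨_, onesUnitMatrix_isFunctionalPIR s⟩
  refine le_antisymm (Nat.sInf_le hmem) (le_csInf ⟨_, hmem⟩ ?_)
  rintro n ⟨G, hG⟩
  exact hG.succ_le hs
end

section
/- For every integer s ≥ 1, FP(s, 2^{s-1}) = 2^s - 1. -/
/-!
The columns of the simplex code are all nonzero vectors of `F_2^s`. Given a request `v ≠ 0`, the
`2^(s-1)` cosets of `{0, v}` partition `F_2^s`, and each coset `{x, x + v}` sums to `v`; removing
the zero vector does not change a sum. So the nonzero vectors split into `2^(s-1)` recovery sets
(`isFunctionalPIR_simplex`).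

Conversely, let `a ≠ 0` and choose `v` with `a ⬝ᵥ v = 1`. Each of the `k` disjoint recovery sets
of `v` contains a column `g` with `a ⬝ᵥ g = 1`, so at least `k` columns do (`le_card_columns`).
Any column `g` satisfies `a ⬝ᵥ g = 1` for at most `2^(s-1)` vectors `a`
(`card_dotProduct_eq_one_le`). Double counting such pairs gives
`(2^s - 1) * 2^(s-1) ≤ n * 2^(s-1)`.
-/

open scoped BigOperators

open scoped Matrix

lemma zmod_two_ne_zero {x : ZMod 2} : x ≠ 0 ↔ x = 1 := by
  revert x; decide

/-- Labels the coset of `x` modulo `{0, v}` by the coordinates other than `i` of its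
representative vanishing at `i`; this is a complete invariant of the coset when `v i = 1`. -/
def cosetLabel {t : ℕ} (v : Fin (t + 1) → ZMod 2) (i : Fin (t + 1)) (x : Fin (t + 1) → ZMod 2) :
    Fin t → ZMod 2 :=
  fun j => x (i.succAbove j) + x i * v (i.succAbove j)

lemma filter_cosetLabel {t : ℕ} (v : Fin (t + 1) → ZMod 2) (i : Fin (t + 1)) (hv : v i = 1)
    (y : Fin t → ZMod 2) :
    (Finset.univ.filter fun x => cosetLabel v i x = y) =
      {i.insertNth (0 : ZMod 2) y, i.insertNth (0 : ZMod 2) y + v} := by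
  ext x
  simp only [Finset.mem_filter, Finset.mem_univ, true_and, Finset.mem_insert,
    Finset.mem_singleton]
  constructor
  · rintro rfl
    by_cases hx : x i = 0
    · left
      funext j
      refine Fin.succAboveCases i ?_ (fun j => ?_) j <;> simp [cosetLabel, hx]
    · right
      have hx : x i = 1 := zmod_two_ne_zero.1 hx
      funext j
      refine Fin.succAboveCases i ?_ (fun j => ?_) j
      · simp [hx, hv]
      · simp [cosetLabel, hx, add_assoc, CharTwo.add_self_eq_zero]
  · rintro (rfl | rfl) <;> funext j <;>
      simp [cosetLabel, hv, add_assoc, CharTwo.add_self_eq_zero]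

lemma sum_cosetLabel {t : ℕ} (v : Fin (t + 1) → ZMod 2) (i : Fin (t + 1)) (hv : v i = 1)
    (y : Fin t → ZMod 2) (m : Fin (t + 1)) :
    ∑ x with cosetLabel v i x = y, x m = v m := by
  have hne : (i.insertNth (0 : ZMod 2) y : Fin (t + 1) → ZMod 2) ≠
      i.insertNth (0 : ZMod 2) y + v := by
    intro h
    have := congrFun h i
    simp [hv] at this
  rw [filter_cosetLabel v i hv, Finset.sum_pair hne, Pi.add_apply, ← add_assoc,
    CharTwo.add_self_eq_zero, zero_add]

/-- The simplex code, whose columns are the nonzero vectors of `F_2^(t+1)` in the order given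
by `e`. -/
lemma isFunctionalPIR_simplex {t n : ℕ} (e : Fin n ≃ {x : Fin (t + 1) → ZMod 2 // x ≠ 0}) :
    IsFunctionalPIR (t + 1) n (2 ^ t) (fun m l => (e l).1 m) := by
  intro v hv
  obtain ⟨i, hi⟩ := Function.ne_iff.1 hv
  have hi : v i = 1 := zmod_two_ne_zero.1 hi
  let f : Fin (2 ^ t) ≃ (Fin t → ZMod 2) := Fintype.equivOfCardEq (by simp [ZMod.card])
  refine ⟨fun j => Finset.univ.filter fun l => cosetLabel v i (e l).1 = f j, ?_, ?_⟩
  · intro j j' hj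
    rw [Finset.disjoint_filter]
    intro l _ h h'
    exact hj (f.injective (h.symm.trans h'))
  · intro j m
    rw [← sum_cosetLabel v i hi (f j) m, Finset.sum_filter, Finset.sum_filter]
    rw [e.sum_comp fun x => if cosetLabel v i x.1 = f j then x.1 m else 0]
    -- the zero vector contributes nothing to the sum over its coset
    rw [← Finset.sum_subtype (Finset.univ.filter fun x : Fin (t + 1) → ZMod 2 => x ≠ 0) (by simp)
      fun x => if cosetLabel v i x = f j then x m else 0]
    refine Finset.sum_subset (Finset.subset_univ _) fun x _ hx => ?_
    have : x = 0 := by simpa using hx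
    simp [this]

lemma le_card_columns {s n k : ℕ} {G : Matrix (Fin s) (Fin n) (ZMod 2)}
    (hG : IsFunctionalPIR s n k G) {a : Fin s → ZMod 2} (ha : a ≠ 0) :
    k ≤ (Finset.univ.filter fun l => a ⬝ᵥ G.col l = 1).card := by
  obtain ⟨i, hi⟩ := Function.ne_iff.1 ha
  have hi : a i = 1 := zmod_two_ne_zero.1 hi
  obtain ⟨R, hd, hR⟩ := hG (Pi.single i 1) (by simp)
  have key : ∀ j, ∃ l ∈ R j, a ⬝ᵥ G.col l = 1 := by
    intro j
    -- pairing the `j`-th recovery set with `a` gives `a i = 1`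
    have h : ∑ l ∈ R j, a ⬝ᵥ G.col l ≠ 0 := by
      have : ∑ l ∈ R j, a ⬝ᵥ G.col l = a ⬝ᵥ Pi.single i 1 := by
        simp only [dotProduct, Matrix.col_apply]
        rw [Finset.sum_comm]
        exact Finset.sum_congr rfl fun m _ => by rw [← Finset.mul_sum, hR]
      rw [this]
      simp [hi]
    obtain ⟨l, hl, h⟩ := Finset.exists_ne_zero_of_sum_ne_zero h
    exact ⟨l, hl, zmod_two_ne_zero.1 h⟩
  choose c hc hc' using key
  have hinj : Function.Injective c := by
    intro j j' h
    by_contra hj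
    exact Finset.disjoint_left.1 (hd j j' hj) (hc j) (h ▸ hc j')
  simpa using Finset.card_le_card_of_injOn (s := Finset.univ)
    (t := Finset.univ.filter fun l => a ⬝ᵥ G.col l = 1) c (by simp [Set.MapsTo, hc'])
    hinj.injOn

lemma card_dotProduct_eq_one_le {t : ℕ} (g : Fin (t + 1) → ZMod 2) :
    (Finset.univ.filter fun a : Fin (t + 1) → ZMod 2 => a ⬝ᵥ g = 1).card ≤ 2 ^ t := by
  by_cases hg : g = 0
  · simp [hg]
  obtain ⟨i, hi⟩ := Function.ne_iff.1 hg
  have hi : g i = 1 := zmod_two_ne_zero.1 hi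
  -- translation by the `i`-th unit vector flips the value of `a ⬝ᵥ g`
  have h1 : (Finset.univ.filter fun a : Fin (t + 1) → ZMod 2 => a ⬝ᵥ g = 1).card ≤
      (Finset.univ.filter fun a : Fin (t + 1) → ZMod 2 => ¬ a ⬝ᵥ g = 1).card := by
    refine Finset.card_le_card_of_injOn (fun a => a + Pi.single i 1) ?_
      (add_left_injective _).injOn
    intro a ha
    have ha : a ⬝ᵥ g = 1 := by simpa using ha
    simp [add_dotProduct, ha, hi]
  have h2 := Finset.card_filter_add_card_filter_not (s := Finset.univ)
    (fun a : Fin (t + 1) → ZMod 2 => a ⬝ᵥ g = 1)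
  have h3 : (Finset.univ : Finset (Fin (t + 1) → ZMod 2)).card = 2 * 2 ^ t := by
    simp [ZMod.card, pow_succ']
  omega

lemma length_lower_bound {t n : ℕ} {G : Matrix (Fin (t + 1)) (Fin n) (ZMod 2)}
    (hG : IsFunctionalPIR (t + 1) n (2 ^ t) G) : 2 ^ (t + 1) - 1 ≤ n := by
  let S : Finset (Fin (t + 1) → ZMod 2) := Finset.univ.erase 0
  have hS : S.card = 2 ^ (t + 1) - 1 := by
    simp [S, ZMod.card]
  -- double counting of pairs (vector `a`, column `g`) with `a ⬝ᵥ g = 1`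
  have h := Finset.card_mul_le_card_mul (s := S) (t := Finset.univ)
    (fun a (l : Fin n) => a ⬝ᵥ G.col l = 1) (m := 2 ^ t) (n := 2 ^ t)
    (fun a ha => le_card_columns hG (Finset.ne_of_mem_erase ha))
    (fun l _ => (Finset.card_le_card (Finset.filter_subset_filter _ (Finset.subset_univ _))).trans
      (card_dotProduct_eq_one_le (G.col l)))
  rw [hS, Finset.card_univ, Fintype.card_fin] at h
  exact Nat.le_of_mul_le_mul_right h (by positivity)

theorem FP_simplex (s : ℕ) (hs : 1 ≤ s) :
    FP s (2 ^ (s - 1)) = 2 ^ s - 1 := by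
  obtain ⟨t, rfl⟩ : ∃ t, s = t + 1 := ⟨s - 1, by omega⟩
  rw [Nat.add_sub_cancel]
  have e : Fin (2 ^ (t + 1) - 1) ≃ {x : Fin (t + 1) → ZMod 2 // x ≠ 0} :=
    Fintype.equivOfCardEq (by
      rw [Fintype.card_subtype_compl]
      simp [ZMod.card])
  have hmem : 2 ^ (t + 1) - 1 ∈ {n : ℕ | ∃ G : Matrix (Fin (t + 1)) (Fin n) (ZMod 2),
      IsFunctionalPIR (t + 1) n (2 ^ t) G} := ⟨_, isFunctionalPIR_simplex e⟩
  refine le_antisymm (Nat.sInf_le hmem) (le_csInf ⟨_, hmem⟩ ?_)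
  rintro n ⟨G, hG⟩
  exact length_lower_bound hG
end

section
/- For all integers r ≥ 1 and t ≥ 1, FP(rt, 2^r) ≤ (2^r - 1)(t + 1); that is, there exists a functional 2^r-PIR code of dimension rt and length (2^r - 1)(t + 1). -/
/-!
Write `F_2^(rt)` as `t` blocks `F_2^r`. Take as columns, for every nonzero `x ∈ F_2^r`, the vector
`e_i(x)` with `x` in block `i` and zeros elsewhere (for each of the `t` blocks), and the diagonal
vector `d(x) = (x, …, x)`. Set `d(0) = e_i(0) = 0`. A request `v = (v_1, …, v_t)` satisfies
`v = d(y) + ∑ i, e_i(y + v_i)` for each `y ∈ F_2^r`. Since `y ↦ y` and `y ↦ y + v_i` are injective,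
distinct `y` use distinct columns, which gives `2^r` pairwise disjoint recovery sets.
-/

open scoped BigOperators

/-- The column indices of the construction: `(some i, x)` stands for `e_i(x)` and `(none, x)` for
the diagonal vector `d(x)`, with `x ≠ 0`. -/
abbrev ColIdx (r t : ℕ) : Type := Option (Fin t) × {x : Fin r → ZMod 2 // x ≠ 0}

/-- The coordinate `a` of block `i` of the vector `e_j(x)` (if `o = some j`) or `d(x)`
(if `o = none`). -/
def colEntry {r t : ℕ} (o : Option (Fin t)) (x : Fin r → ZMod 2) (a : Fin r) (i : Fin t) :
    ZMod 2 :=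
  if o = none ∨ o = some i then x a else 0

/-- The part of the request `w` by which the `o`-th column family is shifted: the block `w i` for
`o = some i`, and `0` for the diagonal family. -/
def shift {r t : ℕ} (w : Fin t → Fin r → ZMod 2) (o : Option (Fin t)) : Fin r → ZMod 2 :=
  o.elim 0 w

/-- The columns `d(y)` and `e_i(y + w_i)`, omitting those whose argument is zero. -/
def recSet {r t : ℕ} (w : Fin t → Fin r → ZMod 2) (y : Fin r → ZMod 2) : Finset (ColIdx r t) :=
  Finset.univ.filter fun p => p.2.1 = y + shift w p.1

lemma recSet_disjoint {r t : ℕ} (w : Fin t → Fin r → ZMod 2) {y y' : Fin r → ZMod 2}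
    (h : y ≠ y') : Disjoint (recSet w y) (recSet w y') := by
  rw [Finset.disjoint_left]
  intro p hp hp'
  simp only [recSet, Finset.mem_filter, Finset.mem_univ, true_and] at hp hp'
  exact h (add_right_cancel (hp.symm.trans hp'))

/-- Summing over the nonzero `x` equal to `z` picks out `f z`, even for `z = 0`, because `f 0 = 0`:
the omitted zero columns do not contribute. -/
lemma sum_nonzero_eq {r : ℕ} (f : (Fin r → ZMod 2) → ZMod 2) (hf : f 0 = 0)
    (z : Fin r → ZMod 2) :
    ∑ x : {x : Fin r → ZMod 2 // x ≠ 0}, (if x.1 = z then f x.1 else 0) = f z := by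
  by_cases hz : z = 0
  · subst hz
    rw [hf]
    exact Finset.sum_eq_zero fun x _ => if_neg x.2
  · rw [Finset.sum_eq_single (⟨z, hz⟩ : {x : Fin r → ZMod 2 // x ≠ 0})]
    · simp
    · intro x _ hx
      exact if_neg fun h => hx (Subtype.ext h)
    · simp

lemma recSet_sum {r t : ℕ} (w : Fin t → Fin r → ZMod 2) (y : Fin r → ZMod 2)
    (a : Fin r) (i : Fin t) :
    ∑ p ∈ recSet w y, colEntry p.1 p.2.1 a i = w i a := by
  rw [recSet, Finset.sum_filter, Fintype.sum_prod_type]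
  have h : ∀ o : Option (Fin t), ∑ x : {x : Fin r → ZMod 2 // x ≠ 0},
      (if x.1 = y + shift w o then colEntry o x.1 a i else 0)
        = colEntry o (y + shift w o) a i := fun o =>
    sum_nonzero_eq (fun x => colEntry o x a i) (by simp [colEntry]) _
  simp only [h]
  rw [Fintype.sum_option]
  simp only [colEntry, shift, Option.elim, true_or, if_true, reduceCtorEq, false_or,
    Option.some.injEq, Finset.sum_ite_eq', Finset.mem_univ, Pi.add_apply, Pi.zero_apply, add_zero]
  rw [← add_assoc, CharTwo.add_self_eq_zero, zero_add]

lemma card_colIdx (r t : ℕ) : Fintype.card (ColIdx r t) = (2 ^ r - 1) * (t + 1) := by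
  rw [Fintype.card_prod, Fintype.card_option, Fintype.card_fin, mul_comm,
    Fintype.card_subtype_compl]
  simp [ZMod.card]

theorem FP_upper_pow_two (r t : ℕ) (hr : 1 ≤ r) (ht : 1 ≤ t) :
    FP (r * t) (2 ^ r) ≤ (2 ^ r - 1) * (t + 1) := by
  apply Nat.sInf_le
  let e : ColIdx r t ≃ Fin ((2 ^ r - 1) * (t + 1)) := Fintype.equivFinOfCardEq (card_colIdx r t)
  let g : (Fin r → ZMod 2) ≃ Fin (2 ^ r) := Fintype.equivFinOfCardEq (by simp [ZMod.card])
  let b : Fin r × Fin t ≃ Fin (r * t) := finProdFinEquiv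
  refine ⟨fun k l => colEntry (e.symm l).1 (e.symm l).2.1 (b.symm k).1 (b.symm k).2, ?_⟩
  intro v _
  let w : Fin t → Fin r → ZMod 2 := fun i a => v (b (a, i))
  refine ⟨fun j => (recSet w (g.symm j)).map e.toEmbedding, fun j j' hj => ?_, fun j k => ?_⟩
  · rw [Finset.disjoint_map]
    exact recSet_disjoint w (g.symm.injective.ne hj)
  · rw [Finset.sum_map]
    simp only [Equiv.coe_toEmbedding, Equiv.symm_apply_apply]
    rw [recSet_sum]
    exact congrArg v (b.apply_symm_apply k)
end

section
/- For all integers r ≥ 2 and t ≥ 1, FP(rt, 2^r - 2) ≤ (2^r - 2)t + 2^r - 3; that is, there exists a functional (2^r - 2)-PIR code of dimension rt and length (2^r - 2)t + 2^r - 3. -/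
/-!
Put `F = F_2^r` and view `F_2^(rt)` as `F^t`. Fix distinct nonzero `a, b ∈ F` and let `c = a + b`.
The code has the diagonal columns `(x, …, x)` with `x ∉ {0, a, b}`, and for every block `i` the
columns `e_i(x)` with `x ∉ {0, c}`; this makes `(2^r - 3) + t (2^r - 2)` columns.

Given a request `v`, for every `z ∈ F` the diagonal column of `z` and the columns `e_i(v_i + z)` add
up to `v`, and these `2^r` sets are disjoint (zero columns being omitted). Give up the two sets
`z = a` and `z = b`. The missing diagonal columns are then not needed, and in each block `i` the
columns `e_i(v_i + a)`, `e_i(v_i + b)` become free. Their sum is `e_i(c)`, so together they stand in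
for the missing column `e_i(c)` in the set `z = v_i + c`. The computation in one block is
`sum_block`.

The disjoint sets are described as the fibres of a labelling of the columns, so that disjointness
is automatic (`FP_le_card`).
-/

open scoped BigOperators

/-- Recovery sets given as fibres of a labelling of the columns: the coordinates are indexed by `I`,
the columns by `J`, and the recovery sets by those labels that lie in `Z`. -/
lemma FP_le_card {s : ℕ} {I J L : Type*} [Fintype J] [DecidableEq L] (e : Fin s ≃ I)
    (col : J → I → ZMod 2) (Z : Finset L)
    (h : ∀ v : I → ZMod 2, ∃ lab : J → L, ∀ z ∈ Z, ∀ i, ∑ l with lab l = z, col l i = v i) :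
    FP s Z.card ≤ Fintype.card J := by
  classical
  refine Nat.sInf_le ?_
  let f : Fin (Fintype.card J) ≃ J := (Fintype.equivFin J).symm
  refine ⟨fun i l => col (f l) (e i), fun v _ => ?_⟩
  obtain ⟨lab, hlab⟩ := h (fun i => v (e.symm i))
  refine ⟨fun j => Finset.univ.filter fun l => lab (f l) = (Z.equivFin.symm j : L), ?_, ?_⟩
  · intro j j' hj
    rw [Finset.disjoint_left]
    intro l hl hl'
    simp only [Finset.mem_filter, Finset.mem_univ, true_and] at hl hl'
    exact hj (Z.equivFin.symm.injective (Subtype.ext (hl.symm.trans hl')))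
  · intro j i
    have := hlab _ (Z.equivFin.symm j).2 (e i)
    rw [Equiv.symm_apply_apply] at this
    rw [← this, Finset.sum_filter, Finset.sum_filter]
    exact Equiv.sum_comp f
      (fun l => if lab l = (Z.equivFin.symm j : L) then col l (e i) else 0)

/-- The label, for the request component `w`, of the column `x` of a block: normally `w + x`, but the
columns `w + a` and `w + b` are both moved to the set that lacks the column `a + b`. -/
def blockLabel {V : Type*} [Add V] [DecidableEq V] (a b w x : V) : V :=
  if x = w + a ∨ x = w + b then w + (a + b) else w + x

section
variable {V : Type*} [AddCommGroup V] [Fintype V] [DecidableEq V]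

/-- In a group of exponent two, within one block punctured at `0` and `a + b`, the columns
labelled `z` add up to `w + z`. -/
lemma sum_block (h2 : ∀ x : V, x + x = 0) {a b : V} (hab : a ≠ b) (w z : V)
    (hza : z ≠ a) (hzb : z ≠ b) :
    ∑ x ∈ (Finset.univ \ {0, a + b} : Finset V) with blockLabel a b w x = z, x = w + z := by
  have cancel : ∀ x y : V, x + (x + y) = y := fun x y => by rw [← add_assoc, h2, zero_add]
  by_cases hz : z = w + (a + b)
  · -- The column `a + b` is the one required but absent; the two moved columns replace it.
    have hs : ((Finset.univ \ {0, a + b} : Finset V).filter fun x => blockLabel a b w x = z)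
        = {w + a, w + b} := by
      ext x
      simp only [Finset.mem_filter, Finset.mem_sdiff, Finset.mem_univ, true_and,
        Finset.mem_insert, Finset.mem_singleton, not_or]
      unfold blockLabel
      constructor
      · rintro ⟨⟨-, hx⟩, h⟩
        by_contra hn
        rw [if_neg hn, hz] at h
        exact hx (add_left_cancel h)
      · intro h
        refine ⟨⟨?_, ?_⟩, by rw [if_pos h, hz]⟩
        · rintro rfl
          rcases h with h | h
          · apply hzb; rw [hz, ← add_assoc, ← h, zero_add]
          · apply hza; rw [hz, add_comm a b, ← add_assoc, ← h, zero_add]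
        · rintro rfl
          rcases h with h | h
          · apply hza; rw [hz, h, cancel]
          · apply hzb; rw [hz, h, cancel]
    rw [hs, Finset.sum_pair (fun h => hab (add_left_cancel h)), hz, cancel, add_add_add_comm, h2,
      zero_add]
  · have key : ∀ x, blockLabel a b w x = z ↔ x = w + z := by
      intro x
      unfold blockLabel
      split_ifs with h
      · refine ⟨fun h' => absurd h'.symm hz, fun h' => ?_⟩
        rcases h with h | h
        · exact absurd (add_left_cancel (h'.symm.trans h)) hza
        · exact absurd (add_left_cancel (h'.symm.trans h)) hzb
      · constructor
        · rintro rfl; rw [cancel]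
        · rintro rfl; rw [cancel]
    simp only [key]
    rw [Finset.sum_filter, Finset.sum_ite_eq']
    split_ifs with h
    · rfl
    · -- The column `w + z` is absent, and it is not `a + b`, so it is the zero column.
      have hne : w + z ≠ a + b := fun h' => hz (by rw [← h', cancel])
      simp only [Finset.mem_sdiff, Finset.mem_univ, true_and, Finset.mem_insert,
        Finset.mem_singleton, not_or, not_and, not_not] at h
      by_contra hn
      exact hne (h (fun h0 => hn h0.symm))

end

theorem FP_upper_one_punctured (r t : ℕ) (hr : 2 ≤ r) (ht : 1 ≤ t) :
    FP (r * t) (2 ^ r - 2) ≤ (2 ^ r - 2) * t + 2 ^ r - 3 := by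
  classical
  obtain ⟨a, b, ha, hb, hab⟩ : ∃ a b : Fin r → ZMod 2, a ≠ 0 ∧ b ≠ 0 ∧ a ≠ b := by
    refine ⟨Pi.single ⟨0, by omega⟩ 1, Pi.single ⟨1, by omega⟩ 1, by simp, by simp, ?_⟩
    intro h
    have := congrFun h ⟨0, by omega⟩
    simp at this
  have h2 : ∀ x : Fin r → ZMod 2, x + x = 0 := fun x => funext fun i => CharTwo.add_self_eq_zero _
  have hc : a + b ≠ 0 := fun h => hab (add_right_cancel (h.trans (h2 b).symm))
  let Z : Finset (Fin r → ZMod 2) := Finset.univ \ {a, b}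
  let D : Finset (Fin r → ZMod 2) := Finset.univ \ {0, a, b}
  let B : Finset (Fin r → ZMod 2) := Finset.univ \ {0, a + b}
  have hV : (Finset.univ : Finset (Fin r → ZMod 2)).card = 2 ^ r := by simp [ZMod.card]
  have hZ : Z.card = 2 ^ r - 2 := by
    rw [Finset.card_sdiff_of_subset (Finset.subset_univ _), hV, Finset.card_pair hab]
  have hB : B.card = 2 ^ r - 2 := by
    rw [Finset.card_sdiff_of_subset (Finset.subset_univ _), hV, Finset.card_pair hc.symm]
  have hD : D.card = 2 ^ r - 3 := by
    rw [Finset.card_sdiff_of_subset (Finset.subset_univ _), hV,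
      Finset.card_eq_three.2 ⟨0, a, b, ha.symm, hb.symm, hab, rfl⟩]
  have h4 : 2 ^ 2 ≤ 2 ^ r := Nat.pow_le_pow_right (by norm_num) hr
  have hJ : Fintype.card (D ⊕ (Fin t × B)) = (2 ^ r - 2) * t + 2 ^ r - 3 := by
    rw [Fintype.card_sum, Fintype.card_prod, Fintype.card_coe, Fintype.card_coe, Fintype.card_fin,
      hD, hB, mul_comm t]
    omega
  rw [← hJ, ← hZ]
  -- Coordinate `(k, m)` is the `k`-th coordinate of the `m`-th block.
  refine FP_le_card (L := Fin r → ZMod 2) (finProdFinEquiv (m := r) (n := t)).symm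
    (fun j p => Sum.elim (fun x : D => x.1 p.1)
      (fun q : Fin t × B => if q.1 = p.2 then q.2.1 p.1 else 0) j) Z ?_
  intro v
  refine ⟨Sum.elim (fun x => x.1)
    (fun q => blockLabel a b (fun k => v (k, q.1)) q.2.1), ?_⟩
  rintro z hz ⟨k, m⟩
  simp only [Z, Finset.mem_sdiff, Finset.mem_univ, true_and, Finset.mem_insert,
    Finset.mem_singleton, not_or] at hz
  have hdiag : (∑ x : D, if x.1 = z then x.1 k else 0) = z k := by
    rw [Finset.sum_coe_sort D (fun x => if x = z then x k else 0), Finset.sum_ite_eq']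
    split_ifs with h
    · rfl
    · -- Since `z ≠ a, b`, only the zero column can be absent.
      have : z = 0 := by
        by_contra hn
        exact h (by simp [D, hn, hz.1, hz.2])
      simp [this]
  have hblock := congrFun (sum_block h2 hab (fun k => v (k, m)) z hz.1 hz.2) k
  rw [Finset.sum_apply, Finset.sum_filter,
    ← Finset.sum_coe_sort B
      (fun x => if blockLabel a b (fun k => v (k, m)) x = z then x k else 0)] at hblock
  rw [Finset.sum_filter, Fintype.sum_sum_type, Fintype.sum_prod_type]
  simp only [Sum.elim_inl, Sum.elim_inr]
  rw [hdiag, Finset.sum_eq_single m]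
  · simp only [if_true]
    rw [hblock, Pi.add_apply, add_left_comm, CharTwo.add_self_eq_zero, add_zero]
  · intro i _ hi
    simp [hi]
  · simp
end

section
/- For all integers r ≥ 2, t ≥ 1 and p with 0 ≤ p < 2^{r-2}, FP(rt, 2^r - 2p) ≤ (2^r - p - 1)t + 2^r - 2p - 1; that is, there exists a functional (2^r - 2p)-PIR code of dimension rt and length (2^r - p - 1)t + 2^r - 2p - 1. -/
/-!
Write `V = F_2^r` and view a request as `v = (v_1, …, v_t) ∈ V^t`. If every `e_i ⊗ x` and every
`(x, …, x)`, with `x ≠ 0` in `V`, is a column, then the `2^r` sets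
`{(u, …, u)} ∪ {e_i ⊗ (v_i + u) : i}`, for `u ∈ V`, are disjoint and each sums to `v`.

To puncture, choose `p` triples `a, b, c = a + b` of nonzero vectors, with the `2p` elements
`a, b` distinct (they form `D`) and the `p` elements `c` distinct (they form `C`). Only the columns
`(u, …, u)` with `u ∉ D` and the columns `e_i ⊗ x` with `x ∉ C` are kept. In a single block, a
disjoint family `S u` (`u ∉ D`) with sums `w + u` that avoids `C` is obtained from `S u = {w + u}`
one triple at a time: dropping the indices `a` and `b` frees `S a ∪ S b`, whose sum is
`(w + a) + (w + b) = c`, so it can replace `c` in the set that contains `c`, if there is one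
(`exists_puncture`).

The triples need not come from a partial spread: a greedy choice suffices. Once `c` is chosen, `a`
only has to avoid `D ∪ {0}` and its translate by `c`, which is at most `4p + 2 < 2^r` vectors.
-/

open scoped BigOperators

/-- The block family for the pair `D`, `C` survives the removal of one more triple
`a, b, c` with `a + b = c`, in a group of exponent two. -/
lemma family_step {V : Type*} [AddCommGroup V] [DecidableEq V] (h2 : ∀ x : V, x + x = 0)
    (D C : Finset V) (a b c : V) (ha : a ∉ D) (hb : b ∉ D) (hab : a ≠ b) (hc : a + b = c)
    (w : V) (S : V → Finset V)
    (hd : ∀ u u', u ∉ D → u' ∉ D → u ≠ u' → Disjoint (S u) (S u'))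
    (hs : ∀ u, u ∉ D → ∑ x ∈ S u, x = w + u)
    (hC : ∀ u, u ∉ D → Disjoint (S u) C) :
    ∃ S' : V → Finset V,
      (∀ u u', u ∉ insert a (insert b D) → u' ∉ insert a (insert b D) → u ≠ u' →
        Disjoint (S' u) (S' u')) ∧
      (∀ u, u ∉ insert a (insert b D) → ∑ x ∈ S' u, x = w + u) ∧
      (∀ u, u ∉ insert a (insert b D) → Disjoint (S' u) (insert c C)) := by
  have hneg : ∀ x : V, -x = x := fun x => neg_eq_of_add_eq_zero_left (h2 x)
  refine ⟨fun u => if c ∈ S u then (S u \ {c}) ∪ ((S a ∪ S b) \ {c}) else S u, ?_, ?_, ?_⟩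
  · intro u u' hu hu' hne
    simp only [Finset.mem_insert, not_or] at hu hu'
    have h1 := hd u u' hu.2.2 hu'.2.2 hne
    have h3 := hd u a hu.2.2 ha hu.1
    have h4 := hd u b hu.2.2 hb hu.2.1
    have h5 := hd u' a hu'.2.2 ha hu'.1
    have h6 := hd u' b hu'.2.2 hb hu'.2.1
    rw [Finset.disjoint_left] at *
    intro x
    dsimp only
    split_ifs with p q q
    · exact absurd q (h1 p)
    all_goals try simp only [Finset.mem_union, Finset.mem_sdiff]
    all_goals grind
  · intro u hu
    simp only [Finset.mem_insert, not_or] at hu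
    dsimp only
    split_ifs with p
    · have hua := hd u a hu.2.2 ha hu.1
      have hub := hd u b hu.2.2 hb hu.2.1
      have hcn : c ∉ S a ∪ S b := by
        rw [Finset.disjoint_left] at hua hub
        simp [hua p, hub p]
      rw [Finset.sdiff_singleton_eq_erase c (S a ∪ S b), Finset.erase_eq_of_notMem hcn,
        Finset.sum_union, Finset.sum_union (hd a b ha hb hab), hs a ha, hs b hb]
      · have := Finset.sum_erase_add (S u) (fun x => x) p
        rw [Finset.sdiff_singleton_eq_erase, eq_sub_of_add_eq this, hs u hu.2.2]
        calc w + u - c + (w + a + (w + b)) = (w + w) + (a + b) - c + (w + u) := by abel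
          _ = w + u := by rw [h2, hc]; abel
      · rw [Finset.disjoint_union_right]
        exact ⟨hua.mono_left Finset.sdiff_subset, hub.mono_left Finset.sdiff_subset⟩
    · exact hs u hu.2.2
  · intro u hu
    simp only [Finset.mem_insert, not_or] at hu
    have h1 := hC u hu.2.2
    have h3 := hC a ha
    have h4 := hC b hb
    rw [Finset.disjoint_left] at *
    intro x
    dsimp only
    split_ifs with p
    · simp only [Finset.mem_union, Finset.mem_sdiff, Finset.mem_insert, Finset.mem_singleton]
      grind
    · simp only [Finset.mem_insert]
      grind

/-- `D` is the set of vectors punctured from the repeated block and `C` the set punctured from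
each of the other blocks. -/
lemma exists_puncture {V : Type*} [AddCommGroup V] [Fintype V] [DecidableEq V]
    (h2 : ∀ x : V, x + x = 0) (p : ℕ) (hp : 4 * p < Fintype.card V) :
    ∃ D C : Finset V, D.card = 2 * p ∧ C.card = p ∧ 0 ∉ D ∧ 0 ∉ C ∧
      ∀ w : V, ∃ S : V → Finset V,
        (∀ u u', u ∉ D → u' ∉ D → u ≠ u' → Disjoint (S u) (S u')) ∧
        (∀ u, u ∉ D → ∑ x ∈ S u, x = w + u) ∧
        (∀ u, u ∉ D → Disjoint (S u) C) := by
  induction p with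
  | zero =>
    refine ⟨∅, ∅, rfl, rfl, by simp, by simp, fun w => ⟨fun u => {w + u}, ?_, ?_, ?_⟩⟩
    · intro u u' _ _ h
      simpa using h
    · simp
    · simp
  | succ p ih =>
    obtain ⟨D, C, hD, hC, h0D, h0C, hS⟩ := ih (by omega)
    obtain ⟨c, hc⟩ : ∃ c, c ∉ insert 0 C := by
      by_contra! h
      have := Finset.card_le_card (fun x _ => h x : (Finset.univ : Finset V) ⊆ insert 0 C)
      rw [Finset.card_insert_of_notMem h0C, Finset.card_univ] at this
      omega
    obtain ⟨a, ha⟩ : ∃ a, a ∉ insert 0 D ∪ (insert 0 D).image (· + c) := by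
      by_contra! h
      have h1 := Finset.card_le_card
        (fun x _ => h x : (Finset.univ : Finset V) ⊆ insert 0 D ∪ (insert 0 D).image (· + c))
      have h3 := Finset.card_union_le (insert 0 D) ((insert 0 D).image (· + c))
      have h4 := Finset.card_image_le (s := insert 0 D) (f := (· + c))
      rw [Finset.card_insert_of_notMem h0D] at h3 h4
      rw [Finset.card_univ] at h1
      omega
    simp only [Finset.mem_insert, not_or] at hc
    rw [Finset.mem_union, not_or] at ha
    obtain ⟨ha1, ha2⟩ := ha
    have hb : a + c ∉ insert 0 D := by
      intro hb
      apply ha2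
      rw [Finset.mem_image]
      exact ⟨a + c, hb, by rw [add_assoc, h2, add_zero]⟩
    simp only [Finset.mem_insert, not_or] at ha1 hb
    have hab : a ≠ a + c := by
      intro h
      exact hc.1 (by simpa using h)
    refine ⟨insert a (insert (a + c) D), insert c C, ?_, ?_, ?_, ?_, ?_⟩
    · rw [Finset.card_insert_of_notMem, Finset.card_insert_of_notMem hb.2, hD]
      · ring
      · simp only [Finset.mem_insert, not_or]
        exact ⟨hab, ha1.2⟩
    · rw [Finset.card_insert_of_notMem hc.2, hC]
    · simp only [Finset.mem_insert, not_or]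
      exact ⟨fun h => ha1.1 h.symm, fun h => hb.1 h.symm, h0D⟩
    · simp only [Finset.mem_insert, not_or]
      exact ⟨fun h => hc.1 h.symm, h0C⟩
    · intro w
      obtain ⟨S, hd, hs, hC'⟩ := hS w
      refine family_step h2 D C a (a + c) c ha1.2 hb.2 hab ?_ w S hd hs hC'
      rw [← add_assoc, h2, zero_add]

/-- A code whose rows, columns and recovery sets are indexed by arbitrary finite types
bounds `FP`. -/
lemma FP_le_of_types {ι J K : Type*} [Fintype J] [Fintype K] [DecidableEq J]
    {s n k : ℕ} (e : Fin s ≃ ι) (hJ : Fintype.card J = n) (hK : Fintype.card K = k)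
    (M : ι → J → ZMod 2)
    (h : ∀ v : ι → ZMod 2, ∃ R : K → Finset J, (∀ u u', u ≠ u' → Disjoint (R u) (R u')) ∧
      ∀ u i, ∑ l ∈ R u, M i l = v i) : FP s k ≤ n := by
  apply Nat.sInf_le
  let f := Fintype.equivFinOfCardEq hJ
  let g := Fintype.equivFinOfCardEq hK
  refine ⟨fun i l => M (e i) (f.symm l), fun v _ => ?_⟩
  obtain ⟨R, hR, hs⟩ := h (fun i => v (e.symm i))
  refine ⟨fun j => (R (g.symm j)).map f.toEmbedding, ?_, ?_⟩
  · intro j j' hj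
    rw [Finset.disjoint_map]
    exact hR _ _ (fun h => hj (g.symm.injective h))
  · intro j i
    rw [Finset.sum_map]
    simpa using hs (g.symm j) (e i)

theorem FP_upper_p_punctured (r t p : ℕ) (hr : 2 ≤ r) (ht : 1 ≤ t) (hp : p < 2 ^ (r - 2)) :
    FP (r * t) (2 ^ r - 2 * p) ≤ (2 ^ r - p - 1) * t + 2 ^ r - 2 * p - 1 := by
  classical
  have hcard : Fintype.card (Fin r → ZMod 2) = 2 ^ r := by simp
  have hpow : 2 ^ r = 4 * 2 ^ (r - 2) := by
    rw [← Nat.sub_add_cancel hr, pow_add]; simp; ring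
  have h2 : ∀ x : Fin r → ZMod 2, x + x = 0 := fun x => funext fun a => CharTwo.add_self_eq_zero (x a)
  obtain ⟨D, C, hD, hC, h0D, h0C, hS⟩ := exists_puncture h2 p (by rw [hcard]; omega)
  have hsub : ∀ A : Finset (Fin r → ZMod 2), Fintype.card {x // x ∉ A} = 2 ^ r - A.card := by
    intro A
    rw [Fintype.card_subtype_compl, hcard, Fintype.card_coe]
  refine FP_le_of_types (ι := Fin r × Fin t)
    (J := (Fin t × {x // x ∉ insert 0 C}) ⊕ {x // x ∉ insert 0 D})
    (K := {x // x ∉ D}) finProdFinEquiv.symm ?_ ?_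
    (fun i l => Sum.elim (fun q => if q.1 = i.2 then q.2.1 i.1 else 0) (fun x => x.1 i.1) l) ?_
  · rw [Fintype.card_sum, Fintype.card_prod, hsub, hsub, Finset.card_insert_of_notMem h0C,
      Finset.card_insert_of_notMem h0D, hD, hC, Fintype.card_fin,
      mul_comm t, ← Nat.sub_sub, ← Nat.sub_sub]
    omega
  · rw [hsub, hD]
  · intro v
    choose S hd hs hC' using fun i : Fin t => hS (fun a => v (a, i))
    refine ⟨fun u => Finset.univ.filter
      (fun l => Sum.elim (fun q => q.2.1 ∈ S q.1 u.1) (fun x => x.1 = u.1) l), ?_, ?_⟩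
    · intro u u' hne
      have hne' : u.1 ≠ u'.1 := fun h => hne (Subtype.ext h)
      rw [Finset.disjoint_left]
      rintro (⟨i, x⟩ | x) h h'
      · simp only [Finset.mem_filter, Finset.mem_univ, true_and, Sum.elim_inl] at h h'
        exact Finset.disjoint_left.1 (hd i u.1 u'.1 u.2 u'.2 hne') h h'
      · simp only [Finset.mem_filter, Finset.mem_univ, true_and, Sum.elim_inr] at h h'
        exact hne' (h.symm.trans h')
    · rintro ⟨u, hu⟩ ⟨a, i⟩
      -- A sum over the kept columns is a sum over all of `V`: zero vectors contribute nothing.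
      have key : ∀ (A T : Finset (Fin r → ZMod 2)), Disjoint T A →
          ∑ x : {x // x ∉ insert 0 A}, (if x.1 ∈ T then x.1 a else 0) = (∑ x ∈ T, x) a := by
        intro A T hT
        have h1 := Finset.sum_subtype (F := inferInstance) (Finset.univ.filter (fun x => x ∉ insert 0 A))
          (p := fun x => x ∉ insert 0 A) (by simp)
          (fun x : Fin r → ZMod 2 => if x ∈ T then x a else 0)
        rw [← h1, Finset.sum_apply, ← Finset.sum_filter]
        apply Finset.sum_subset
        · intro x hx
          exact (Finset.mem_filter.1 hx).2
        · intro x hx hx'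
          have : x = 0 := by
            by_contra h0
            apply hx'
            simp [h0, hx, Finset.disjoint_left.1 hT hx]
          simp [this]
      rw [Finset.sum_filter, Fintype.sum_sum_type, Fintype.sum_prod_type]
      simp only [Sum.elim_inl, Sum.elim_inr]
      rw [Finset.sum_eq_single i]
      · have k1 := key C (S i u) (hC' i u hu)
        have k2 := key D {u} (by simpa using hu)
        simp only [Finset.mem_singleton, Finset.sum_singleton] at k2
        simp only [if_true]
        rw [k1, k2, hs i u hu, Pi.add_apply, add_assoc, CharTwo.add_self_eq_zero, add_zero]
      · intro j _ hj
        simp [hj]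
      · simp
end

section
/- For all integers r ≥ 2, t ≥ 1 and p with 0 ≤ p < 2^{r-2}, FP(rt, 2^r - 2p - 1) ≤ (2^r - 1 - p)t + 2^r - 2p - 2. -/
/-!
Write `V = F_2^r`. A block is the set of nonzero vectors of `V` outside a set `P` of `p` punctured
vectors; the code has `t` independent blocks (one for each coordinate block of `F_2^{rt}`) and
`2^r - 2p - 2` further columns `(d, d, …, d)`, with `d` in a set `D` of nonzero vectors.
To recover `v = (v_1, …, v_t)` in `2^r - 2p - 1` disjoint ways, indexed by `w ∈ D ∪ {0}`, it suffices
to write, in each block `i`, all vectors `v_i + w` as sums over disjoint subsets of the block: adding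
the column `(w, …, w)` (nothing if `w = 0`) then gives `v`.

Without puncturing the singletons `{v_i + w}` do this, for all `w ∈ V`. Puncturing a vector `x`
costs two indices `a, b` with `a + b = x` (`exists_punctured_block`): the sets belonging to `a` and
`b` together sum to `(v_i + a) + (v_i + b) = x`, so their union can replace `x` in the one set, if
any, that contains `x`, after which `a` and `b` are given up. The choice of `x`, `a` and `b` does not
involve `v_i`, and a count shows that, as long as `p < 2^{r-2}`, the indices `a, b` can be found
outside those already lost and different from `0`.
-/


open scoped BigOperators

/-- A code may be described with arbitrary finite types of rows `ι`, columns `κ` and recovery sets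
`τ`; the request is allowed to be zero. -/
lemma FP_le_card_s13 {ι κ τ : Type*} [Fintype ι] [Fintype κ] [Fintype τ] [DecidableEq κ]
    (G : ι → κ → ZMod 2)
    (h : ∀ v : ι → ZMod 2, ∃ R : τ → Finset κ,
      (∀ j j', j ≠ j' → Disjoint (R j) (R j')) ∧ ∀ j i, ∑ l ∈ R j, G i l = v i) :
    FP (Fintype.card ι) (Fintype.card τ) ≤ Fintype.card κ := by
  let eι := Fintype.equivFin ι
  let eκ := Fintype.equivFin κ
  let eτ := Fintype.equivFin τ
  refine Nat.sInf_le ⟨fun i l => G (eι.symm i) (eκ.symm l), fun v _ => ?_⟩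
  obtain ⟨R, hd, hs⟩ := h (fun i => v (eι i))
  refine ⟨fun j => (R (eτ.symm j)).map eκ.toEmbedding, fun j j' hj => ?_, fun j i => ?_⟩
  · exact (Finset.disjoint_map _).2 (hd _ _ (by simpa using hj))
  · simpa using hs (eτ.symm j) (eι.symm i)

/-- One puncturing step: the sets `S a` and `S b`, which jointly sum to `x`, take the place of `x`
wherever it occurs, and the indices `a, b` are lost. -/
lemma puncture_step {V : Type*} [AddCommGroup V] [DecidableEq V]
    (P U : Finset V) (v x a b : V) (hab : a ≠ b)
    (ha : a ∉ U) (hb : b ∉ U) (S : V → Finset V)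
    (hd : ∀ w, w ∉ U → ∀ w', w' ∉ U → w ≠ w' → Disjoint (S w) (S w'))
    (hP : ∀ w, w ∉ U → Disjoint (S w) P)
    (hs : ∀ w, w ∉ U → ∑ y ∈ S w, y = v + w) (hx : (v + a) + (v + b) = x) :
    ∃ S' : V → Finset V,
      (∀ w, w ∉ insert a (insert b U) → ∀ w', w' ∉ insert a (insert b U) → w ≠ w' →
        Disjoint (S' w) (S' w')) ∧
      (∀ w, w ∉ insert a (insert b U) → Disjoint (S' w) (insert x P)) ∧
      (∀ w, w ∉ insert a (insert b U) → ∑ y ∈ S' w, y = v + w) := by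
  have hdab := hd a ha b hb hab
  have hPa := hP a ha
  have hPb := hP b hb
  refine ⟨fun w => if x ∈ S w then (S w).erase x ∪ (S a ∪ S b) else S w, ?_, ?_, ?_⟩
  · intro w hw w' hw' hne
    simp only [Finset.mem_insert, not_or] at hw hw'
    have h1 := hd w hw.2.2 w' hw'.2.2 hne
    have h2 := hd w hw.2.2 a ha hw.1
    have h3 := hd w hw.2.2 b hb hw.2.1
    have h4 := hd w' hw'.2.2 a ha hw'.1
    have h5 := hd w' hw'.2.2 b hb hw'.2.1
    rw [Finset.disjoint_left] at *
    dsimp only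
    split_ifs <;> grind
  · intro w hw
    simp only [Finset.mem_insert, not_or] at hw
    have h1 := hP w hw.2.2
    have h2 := hd w hw.2.2 a ha hw.1
    have h3 := hd w hw.2.2 b hb hw.2.1
    rw [Finset.disjoint_left] at *
    dsimp only
    split_ifs <;> grind
  · intro w hw
    simp only [Finset.mem_insert, not_or] at hw
    have h2 := hd w hw.2.2 a ha hw.1
    have h3 := hd w hw.2.2 b hb hw.2.1
    dsimp only
    split_ifs with hxw
    · rw [Finset.sum_union, Finset.sum_union hdab, hs a ha, hs b hb, hx,
        Finset.sum_erase_add _ _ hxw, hs w hw.2.2]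
      exact (Finset.disjoint_union_right.2 ⟨h2, h3⟩).mono_left (Finset.erase_subset _ _)
    · exact hs w hw.2.2

/-- `P` is the set of punctured vectors and `U` the set of lost indices. Both are independent of
the request `v`. -/
lemma exists_punctured_block (r p : ℕ) (hp : 4 * p ≤ 2 ^ r) :
    ∃ P U : Finset (Fin r → ZMod 2), P.card = p ∧ 0 ∉ P ∧ U.card = 2 * p ∧ 0 ∉ U ∧
      ∀ v : Fin r → ZMod 2, ∃ S : (Fin r → ZMod 2) → Finset (Fin r → ZMod 2),
        (∀ w, w ∉ U → ∀ w', w' ∉ U → w ≠ w' → Disjoint (S w) (S w')) ∧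
        (∀ w, w ∉ U → Disjoint (S w) P) ∧
        (∀ w, w ∉ U → ∑ y ∈ S w, y = v + w) := by
  have hV : Fintype.card (Fin r → ZMod 2) = 2 ^ r := by simp
  have hdbl : ∀ y : Fin r → ZMod 2, y + y = 0 := fun y =>
    funext fun i => CharTwo.add_self_eq_zero (y i)
  induction p with
  | zero =>
    exact ⟨∅, ∅, rfl, by simp, rfl, by simp, fun v => ⟨fun w => {v + w}, by simp, by simp, by simp⟩⟩
  | succ p ih =>
    obtain ⟨P, U, hPc, hP0, hUc, hU0, h⟩ := ih (by omega)
    obtain ⟨x, hx⟩ : ∃ x, x ∉ insert 0 P := by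
      by_contra! hcon
      have h1 := Finset.card_insert_le 0 P
      rw [Finset.eq_univ_of_forall hcon, Finset.card_univ, hV] at h1
      omega
    -- `U ∪ {0}` and its translate by `x` together have at most `4 * p + 2 < 2 ^ r` elements
    obtain ⟨a, ha⟩ : ∃ a, a ∉ insert 0 U ∪ (insert 0 U).image (fun u => u + x) := by
      by_contra! hcon
      have h1 := Finset.card_union_le (insert 0 U) ((insert 0 U).image (fun u => u + x))
      rw [Finset.eq_univ_of_forall hcon, Finset.card_univ, hV] at h1
      have h2 := Finset.card_insert_le 0 U
      have h3 := Finset.card_image_le (s := insert 0 U) (f := fun u => u + x)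
      omega
    simp only [Finset.mem_insert, not_or] at hx
    have hxx : x + x = 0 := hdbl x
    have hax : a + x ∉ insert 0 U := fun hmem => ha <| Finset.mem_union_right _ <|
      Finset.mem_image.2 ⟨a + x, hmem, by rw [add_assoc, hxx, add_zero]⟩
    have ha' : a ∉ insert 0 U := fun hmem => ha (Finset.mem_union_left _ hmem)
    simp only [Finset.mem_insert, not_or] at hax ha'
    have hne : a ≠ a + x := by simpa using hx.1
    refine ⟨insert x P, insert a (insert (a + x) U), ?_, ?_, ?_, ?_, fun v => ?_⟩
    · rw [Finset.card_insert_of_notMem hx.2, hPc]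
    · simp only [Finset.mem_insert, not_or]
      exact ⟨fun e => hx.1 e.symm, hP0⟩
    · rw [Finset.card_insert_of_notMem, Finset.card_insert_of_notMem hax.2, hUc]
      · ring
      · simp only [Finset.mem_insert, not_or]
        exact ⟨hne, ha'.2⟩
    · simp only [Finset.mem_insert, not_or]
      exact ⟨fun e => ha'.1 e.symm, fun e => hax.1 e.symm, hU0⟩
    · obtain ⟨S, hd, hSP, hs⟩ := h v
      refine puncture_step P U v x a (a + x) hne ha'.2 hax.2 S hd hSP hs ?_
      have : v + a + (v + (a + x)) = (v + v) + (a + a) + x := by abel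
      rw [this, hdbl, hdbl, zero_add, zero_add]

theorem FP_upper_p_punctured_odd (r t p : ℕ) (hr : 2 ≤ r) (ht : 1 ≤ t) (hp : p < 2 ^ (r - 2)) :
    FP (r * t) (2 ^ r - 2 * p - 1) ≤ (2 ^ r - 1 - p) * t + 2 ^ r - 2 * p - 2 := by
  have hpow : 2 ^ r = 4 * 2 ^ (r - 2) := by
    rw [show (4 : ℕ) = 2 ^ 2 from rfl, ← pow_add]
    congr 1
    omega
  have hV : Fintype.card (Fin r → ZMod 2) = 2 ^ r := by simp
  obtain ⟨P, U, hPc, hP0, hUc, hU0, h⟩ := exists_punctured_block r p (by omega)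
  obtain ⟨D, hDU, hDc⟩ : ∃ D ⊆ (insert 0 U)ᶜ, D.card = 2 ^ r - 2 * p - 2 := by
    apply Finset.exists_subset_card_eq
    rw [Finset.card_compl, hV, Finset.card_insert_of_notMem hU0]
    omega
  have hD0 : (0 : Fin r → ZMod 2) ∉ D := fun h0 => by simpa using hDU h0
  have hWU : ∀ w ∈ insert 0 D, w ∉ U := by
    intro w hw hwU
    rcases Finset.mem_insert.1 hw with rfl | hw
    · exact hU0 hwU
    · have := hDU hw
      simp [hwU] at this
  -- the columns of one block
  let B : Finset (Fin r → ZMod 2) := (insert 0 P)ᶜ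
  let G : Fin r × Fin t → (Fin t × B) ⊕ D → ZMod 2 := fun i c =>
    Sum.elim (fun c => if c.1 = i.2 then c.2.1 i.1 else 0) (fun d => d.1 i.1) c
  have key := FP_le_card_s13 (τ := (insert 0 D : Finset (Fin r → ZMod 2))) G ?_
  · have hB : B.card = 2 ^ r - 1 - p := by
      rw [Finset.card_compl, hV, Finset.card_insert_of_notMem hP0]
      omega
    have hW : (insert 0 D).card = 2 ^ r - 2 * p - 1 := by
      rw [Finset.card_insert_of_notMem hD0]
      omega
    simp only [Fintype.card_prod, Fintype.card_sum, Fintype.card_fin, Fintype.card_coe, hB, hW,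
      hDc] at key
    rw [mul_comm t] at key
    omega
  · intro v
    choose S hd hSP hs using fun i : Fin t => h (fun a => v (a, i))
    refine ⟨fun w => (Finset.univ.filter fun c : Fin t × B => c.2.1 ∈ S c.1 w.1).disjSum
      (Finset.univ.filter fun d : D => d.1 = w.1), ?_, ?_⟩
    · intro w w' hne
      have hne' : w.1 ≠ w'.1 := fun e => hne (Subtype.ext e)
      rw [Finset.disjoint_left]
      rintro (⟨i, x⟩ | d) h1 h2
      · simp only [Finset.inl_mem_disjSum, Finset.mem_filter, Finset.mem_univ, true_and] at h1 h2
        exact Finset.disjoint_left.1 (hd i _ (hWU _ w.2) _ (hWU _ w'.2) hne') h1 h2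
      · simp only [Finset.inr_mem_disjSum, Finset.mem_filter, Finset.mem_univ, true_and] at h1 h2
        exact hne' (h1.symm.trans h2)
    · rintro ⟨w, hw⟩ ⟨a, i⟩
      rw [Finset.sum_disjSum]
      have hblock : ∑ c ∈ Finset.univ.filter (fun c : Fin t × B => c.2.1 ∈ S c.1 w),
          G (a, i) (Sum.inl c) = v (a, i) + w a := by
        have h1 := congrFun (hs i w (hWU w hw)) a
        rw [Finset.sum_apply, Pi.add_apply] at h1
        rw [← h1, Finset.sum_filter, Fintype.sum_prod_type, Finset.sum_eq_single i]
        · -- a zero vector in `S i w` is not a column, but contributes nothing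
          have h2 : ∑ x ∈ B, (if x ∈ S i w then x a else 0) = ∑ x ∈ S i w, x a := by
            rw [← Finset.sum_filter]
            apply Finset.sum_subset
            · intro x hx
              exact (Finset.mem_filter.1 hx).2
            · intro x hx hxB
              have hxP := Finset.disjoint_left.1 (hSP i w (hWU w hw)) hx
              have hx0 : x = 0 := by
                by_contra hx0
                exact hxB (by simp [B, hx, hx0, hxP])
              simp [hx0]
          rw [← h2, ← Finset.sum_coe_sort B]
          simp [G]
        · intro j _ hj
          simp [G, hj]
        · simp
      have hextra : ∑ d ∈ Finset.univ.filter (fun d : D => d.1 = w),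
          G (a, i) (Sum.inr d) = w a := by
        rw [Finset.sum_filter]
        simp only [G, Sum.elim_inr]
        rw [Finset.sum_coe_sort D (fun d => if d = w then d a else 0), Finset.sum_ite_eq']
        rcases Finset.mem_insert.1 hw with rfl | hw
        · simp
        · simp [hw]
      rw [hblock, hextra, add_assoc, CharTwo.add_self_eq_zero, add_zero]
end

section
/- For every integer s ≥ 3: if s is even then FP(s,3) ≥ (3/2)s + 2, and if s is odd then FP(s,3) ≥ (3/2)(s+1). -/
/-!
The bound is a counting argument in the kernel `K` of the code matrix `G`. A request `v ≠ 0` comes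
with three disjoint recovery sets, with indicator vectors `x₀, x₁, x₂`; then `a = x₀ + x₁` and
`b = x₀ + x₂` lie in `K`, and disjointness gives `x₀ = a * b` (coordinatewise), so that the pair
`(a, b)` determines `x₀, x₁, x₂`, hence also `v = G x₀`. The six orderings of the three sets give
six different pairs, so `6 * (2 ^ s - 1) ≤ |K| ^ 2 = 4 ^ (n - s)` (`six_mul_le`). For `s ≥ 3` this
forces `2 * (n - s) ≥ s + 3`, which is the claim after rounding according to the parity of `s`.
Since `FP` is an infimum of naturals, one also needs that some functional `3`-PIR code exists:
repeating the identity matrix three times gives one (`exists_code`).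
-/

open scoped BigOperators

/-- The matrix `[I | I | I]` (up to the order of its columns) is a functional `3`-PIR code. -/
lemma exists_code (s : ℕ) :
    ∃ n, ∃ G : Matrix (Fin s) (Fin n) (ZMod 2), IsFunctionalPIR s n 3 G := by
  let e : Fin (s * 3) ≃ Fin s × Fin 3 := finProdFinEquiv.symm
  refine ⟨s * 3, fun i l => if (e l).1 = i then 1 else 0, fun v _ => ?_⟩
  refine ⟨fun j => Finset.univ.filter fun l => (e l).2 = j ∧ v (e l).1 = 1, ?_, ?_⟩
  · intro j j' hj
    rw [Finset.disjoint_filter]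
    rintro l - ⟨h, -⟩ ⟨h', -⟩
    exact hj (h.symm.trans h')
  · intro j i
    rw [Finset.sum_filter]
    rw [Equiv.sum_comp e
      (fun p : Fin s × Fin 3 => if p.2 = j ∧ v p.1 = 1 then (if p.1 = i then (1 : ZMod 2) else 0)
        else 0), Fintype.sum_prod_type, Finset.sum_eq_single i]
    · have h2 : ∀ z : ZMod 2, (if z = 1 then (1 : ZMod 2) else 0) = z := by decide
      simp [ite_and, h2]
    · intro k _ hk
      simp [hk]
    · simp

/-- Disjoint recovery sets for `v`, rewritten as indicator vectors in `F_2^n`. -/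
lemma exists_vectors {s n : ℕ} {G : Matrix (Fin s) (Fin n) (ZMod 2)}
    (hG : IsFunctionalPIR s n 3 G) (v : Fin s → ZMod 2) (hv : v ≠ 0) :
    ∃ x : Fin 3 → Fin n → ZMod 2,
      (∀ i j, i ≠ j → x i * x j = 0) ∧ ∀ j, G.mulVecLin (x j) = v := by
  obtain ⟨R, hd, hR⟩ := hG v hv
  refine ⟨fun j l => if l ∈ R j then 1 else 0, ?_, ?_⟩
  · intro i j hij
    ext l
    have : l ∈ R i → l ∉ R j := fun h => Finset.disjoint_left.mp (hd i j hij) h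
    by_cases h : l ∈ R i <;> simp_all
  · intro j
    ext i
    rw [← hR j i]
    simp [Matrix.mulVec, dotProduct]

lemma vec_add_self {n : ℕ} (x : Fin n → ZMod 2) : x + x = 0 :=
  funext fun _ => CharTwo.add_self_eq_zero _

lemma vec_mul_self {n : ℕ} (x : Fin n → ZMod 2) : x * x = x := by
  have h : ∀ z : ZMod 2, z * z = z := by decide
  exact funext fun _ => h _

/-- Counting ordered pairs of kernel vectors `(x₀ + x₁, x₀ + x₂)` coming from recovery sets. -/
lemma six_mul_le {s n : ℕ} {G : Matrix (Fin s) (Fin n) (ZMod 2)}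
    (hG : IsFunctionalPIR s n 3 G) :
    (2 ^ s - 1) * 6 ≤ Nat.card (LinearMap.ker G.mulVecLin) ^ 2 := by
  choose x hx hGx using fun v : {v : Fin s → ZMod 2 // v ≠ 0} => exists_vectors hG v.1 v.2
  have hinj : ∀ v, Function.Injective (x v) := by
    intro v i j hij
    by_contra hne
    have h0 := hx v i j hne
    rw [← hij, vec_mul_self] at h0
    have h1 := hGx v i
    rw [h0, map_zero] at h1
    exact v.2 h1.symm
  have hker : ∀ v i j, x v i + x v j ∈ LinearMap.ker G.mulVecLin := by
    intro v i j
    rw [LinearMap.mem_ker, map_add, hGx, hGx, vec_add_self]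
  let f : {v : Fin s → ZMod 2 // v ≠ 0} × Equiv.Perm (Fin 3) →
      LinearMap.ker G.mulVecLin × LinearMap.ker G.mulVecLin := fun p =>
    (⟨_, hker p.1 (p.2 0) (p.2 1)⟩, ⟨_, hker p.1 (p.2 0) (p.2 2)⟩)
  have hf : Function.Injective f := by
    rintro ⟨v, σ⟩ ⟨w, τ⟩ h
    have h1 : x v (σ 0) + x v (σ 1) = x w (τ 0) + x w (τ 1) :=
      congrArg (fun q => (q.1 : Fin n → ZMod 2)) h
    have h2 : x v (σ 0) + x v (σ 2) = x w (τ 0) + x w (τ 2) :=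
      congrArg (fun q => (q.2 : Fin n → ZMod 2)) h
    have hprod : ∀ (u) (ρ : Equiv.Perm (Fin 3)),
        (x u (ρ 0) + x u (ρ 1)) * (x u (ρ 0) + x u (ρ 2)) = x u (ρ 0) := by
      intro u ρ
      have e1 := hx u (ρ 0) (ρ 2) (ρ.injective.ne (by decide))
      have e2 := hx u (ρ 1) (ρ 0) (ρ.injective.ne (by decide))
      have e3 := hx u (ρ 1) (ρ 2) (ρ.injective.ne (by decide))
      rw [add_mul, mul_add, mul_add, e1, e2, e3, vec_mul_self]
      simp
    have h0 : x v (σ 0) = x w (τ 0) := by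
      rw [← hprod v σ, ← hprod w τ, h1, h2]
    have hvw : v = w := by
      apply Subtype.ext
      rw [← hGx v (σ 0), ← hGx w (τ 0), h0]
    subst hvw
    rw [h0] at h1 h2
    have hστ : σ = τ := by
      ext i
      congr 1
      fin_cases i
      · exact hinj v h0
      · exact hinj v (add_left_cancel h1)
      · exact hinj v (add_left_cancel h2)
    rw [hστ]
  have hcard := Nat.card_le_card_of_injective f hf
  rw [Nat.card_prod, Nat.card_prod, ← pow_two] at hcard
  have c1 : Nat.card {v : Fin s → ZMod 2 // v ≠ 0} = 2 ^ s - 1 := by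
    rw [Nat.card_eq_fintype_card, Fintype.card_subtype_compl]
    simp
  have c2 : Nat.card (Equiv.Perm (Fin 3)) = 6 := by
    rw [Nat.card_eq_fintype_card, Fintype.card_perm]
    rfl
  rwa [c1, c2] at hcard

/-- The map of `G` is onto since every request can be recovered, so rank-nullity gives the size of
its kernel. -/
lemma card_ker {s n : ℕ} {G : Matrix (Fin s) (Fin n) (ZMod 2)}
    (hG : IsFunctionalPIR s n 3 G) :
    s ≤ n ∧ Nat.card (LinearMap.ker G.mulVecLin) = 2 ^ (n - s) := by
  have hsurj : LinearMap.range G.mulVecLin = ⊤ := by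
    rw [LinearMap.range_eq_top]
    intro v
    by_cases hv : v = 0
    · exact ⟨0, by rw [hv, map_zero]⟩
    · obtain ⟨x, -, hx⟩ := exists_vectors hG v hv
      exact ⟨x 0, hx 0⟩
  have h := LinearMap.finrank_range_add_finrank_ker G.mulVecLin
  rw [hsurj, finrank_top, Module.finrank_fin_fun, Module.finrank_fin_fun] at h
  refine ⟨by omega, ?_⟩
  rw [Module.natCard_eq_pow_finrank (K := ZMod 2), Nat.card_zmod]
  congr 1
  omega

/-- If `2 * (n - s) ≤ s + 2`, the count would give `6 * (2 ^ s - 1) ≤ 4 * 2 ^ s`, false for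
`s ≥ 2`. -/
lemma length_bound {s n : ℕ} (hs : 3 ≤ s) {G : Matrix (Fin s) (Fin n) (ZMod 2)}
    (hG : IsFunctionalPIR s n 3 G) : 3 * s + 3 ≤ 2 * n := by
  obtain ⟨hsn, hc⟩ := card_ker hG
  have h := six_mul_le hG
  rw [hc, ← pow_mul] at h
  by_contra hlt
  have h1 : 2 ^ ((n - s) * 2) ≤ 2 ^ (s + 2) := Nat.pow_le_pow_right (by norm_num) (by omega)
  have h2 : 2 ^ 3 ≤ 2 ^ s := Nat.pow_le_pow_right (by norm_num) hs
  rw [pow_add] at h1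
  omega

theorem FP_three_lower (s : ℕ) (hs : 3 ≤ s) :
    (Even s → (3 / 2 : ℝ) * (s : ℝ) + 2 ≤ (FP s 3 : ℝ)) ∧
    (Odd s → (3 / 2 : ℝ) * ((s : ℝ) + 1) ≤ (FP s 3 : ℝ)) := by
  obtain ⟨G, hG⟩ : ∃ G : Matrix (Fin s) (Fin (FP s 3)) (ZMod 2),
      IsFunctionalPIR s (FP s 3) 3 G := Nat.sInf_mem (exists_code s)
  have h := length_bound hs hG
  constructor
  · rintro ⟨t, ht⟩
    have h' : 3 * s + 4 ≤ 2 * FP s 3 := by omega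
    have : (3 * s + 4 : ℝ) ≤ 2 * FP s 3 := by exact_mod_cast h'
    linarith
  · intro _
    have : (3 * s + 3 : ℝ) ≤ 2 * FP s 3 := by exact_mod_cast h
    linarith
end

section
/- Let k ≥ 1 be an integer and let c_1, c_2, …, c_k be real numbers in the open interval (0, 1/2] defined by c_1 = 1/2 and, for each 1 ≤ j < k, c_{j+1} is the unique root in (0,1/2) of the equation H(z) = H(c_j)·(1 - z), where H is the binary entropy function. Then the limsup as s tends to infinity of FB(s,k)/s is at most 1/H(c_k). -/
/-!
Take the columns uniformly at random and serve the requests one after the other: the last one by a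
set of `c_k n` columns, the previous one by a proportion `c_{k-1}` of the remaining columns, and so
on. Since `H(c_{j+1}) = H(c_j) (1 - c_{j+1})`, the number of choices for the set is about
`2 ^ (H(c_k) n)` at every stage, which exceeds `2 ^ s` when `n > s / H(c_k)`
(`eventually_choose`).

Column sums over distinct index sets agree with probability `2 ^ (-s)`, so the Cauchy-Schwarz
inequality shows that if the last stages cover an average proportion `δ` of the remaining requests,
then with one more stage a proportion at least `δ ^ 2 / 2` is covered (`second_moment`, `step`).
Only expectations enter this argument: no independence between the chosen set and the remaining
columns is needed. After `k` stages a positive proportion of all `k`-tuples, independent of `s`, is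
covered (`exists_avgCov`).

This is enough, because suitable `k` additional columns square the proportion of uncovered tuples
(`boost_step`); a number of rounds that is at most `ε s`, for any `ε > 0`, brings it below
`2 ^ (-s k)`, that is, to zero (`FB_le_of_avgCov`, `limsup_FB_le`).
-/

open scoped BigOperators

/-- The binary entropy function `H(p) = -p log₂ p - (1-p) log₂ (1-p)`. -/
noncomputable def binEnt (p : ℝ) : ℝ :=
  -p * Real.logb 2 p - (1 - p) * Real.logb 2 (1 - p)

/-! ### Coverage by random columns -/

/-- The requests `v 0, …, v (k - 1)` are sums of the columns `g` over pairwise disjoint sets of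
indices, all contained in the set `S` of available indices. Zero requests are allowed. -/
def Cov {ι V : Type} [AddCommMonoid V] (g : ι → V) (S : Finset ι) (k : ℕ) (v : Fin k → V) :
    Prop :=
  ∃ R : Fin k → Finset ι, (∀ j, R j ⊆ S) ∧ (∀ j j' : Fin k, j ≠ j' → Disjoint (R j) (R j')) ∧
    ∀ j, ∑ l ∈ R j, g l = v j

open Classical in
/-- The number of `k`-tuples of requests that can be served from the columns of `g` in `S`. -/
noncomputable def covCount {ι V : Type} [AddCommMonoid V] [Fintype V] (g : ι → V) (S : Finset ι)
    (k : ℕ) : ℕ := (Finset.univ.filter fun v : Fin k → V => Cov g S k v).card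

theorem cov_cons {ι V : Type} [DecidableEq ι] [AddCommMonoid V] {g : ι → V} {S R : Finset ι}
    (hR : R ⊆ S) {k : ℕ} {v : Fin k → V} (h : Cov g (S \ R) k v) :
    Cov g S (k + 1) (Fin.cons (∑ l ∈ R, g l) v) := by
  obtain ⟨Q, hQ, hd, hs⟩ := h
  have hdis : ∀ j, Disjoint R (Q j) := fun j =>
    Finset.disjoint_of_subset_right (hQ j) Finset.disjoint_sdiff
  refine ⟨Fin.cons R Q, ?_, ?_, ?_⟩
  · intro j
    refine Fin.cases ?_ (fun j => ?_) j
    · simpa using hR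
    · simpa using (hQ j).trans Finset.sdiff_subset
  · intro j j'
    refine Fin.cases ?_ (fun j => ?_) j <;> refine Fin.cases ?_ (fun j' => ?_) j'
    · simp
    · intro _; simpa using hdis j'
    · intro _; simpa using (hdis j).symm
    · intro h; simpa using hd j j' (fun e => h (by rw [e]))
  · intro j
    refine Fin.cases ?_ (fun j => ?_) j
    · simp
    · simpa using hs j

/-- Shifting the single column `g l` by an arbitrary vector `u` embeds `V × {collisions}` into the
space of all column families: `u` is recovered as the difference of the two sums. -/
theorem card_collision_aux {ι V : Type} [Fintype ι] [DecidableEq ι] [AddCommGroup V] [Fintype V]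
    [DecidableEq V] {R R' : Finset ι} {l : ι} (hl : l ∈ R) (hl' : l ∉ R') :
    Fintype.card V * (Finset.univ.filter fun g : ι → V => ∑ i ∈ R, g i = ∑ i ∈ R', g i).card
      ≤ Fintype.card V ^ Fintype.card ι := by
  classical
  rw [← Fintype.card_fun, ← Finset.card_univ (α := V), ← Finset.card_product,
    ← Finset.card_univ (α := ι → V)]
  have key : ∀ (u : V) (g : ι → V), ∑ i ∈ R, g i = ∑ i ∈ R', g i →
      ∑ i ∈ R, (g + Pi.single l u : ι → V) i - ∑ i ∈ R', (g + Pi.single l u : ι → V) i = u := by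
    intro u g hg
    simp [Finset.sum_add_distrib, hl, hl', hg]
  refine Finset.card_le_card_of_injOn (fun p => p.2 + Pi.single l p.1) (by simp) ?_
  rintro ⟨u, g⟩ h1 ⟨u', g'⟩ h2 h
  simp only [Finset.coe_product, Set.mem_prod, Finset.mem_coe, Finset.mem_filter,
    Finset.mem_univ, true_and] at h1 h2 h
  have hu : u = u' := by rw [← key u g h1, ← key u' g' h2, h]
  subst hu
  simpa using h

/-- Two distinct index sets have equal column sums for a proportion at most `1 / |V|` of all
families `g`. -/
theorem card_collision {ι V : Type} [Fintype ι] [DecidableEq ι] [AddCommGroup V] [Fintype V]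
    [DecidableEq V] {R R' : Finset ι} (hne : R ≠ R') :
    Fintype.card V * (Finset.univ.filter fun g : ι → V => ∑ i ∈ R, g i = ∑ i ∈ R', g i).card
      ≤ Fintype.card V ^ Fintype.card ι := by
  by_cases h : R ⊆ R'
  · obtain ⟨l, hl, hl'⟩ := Finset.exists_of_ssubset (h.ssubset_of_ne hne)
    simp_rw [eq_comm (a := ∑ i ∈ R, _)]
    exact card_collision_aux hl hl'
  · obtain ⟨l, hl, hl'⟩ := Finset.not_subset.1 h
    exact card_collision_aux hl hl'

/-- Expected number of pairs of index sets in `P` with equal column sums: at most `|P|` from the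
diagonal plus `|P|² / |V|` from the rest, hence at most `2 |P|² / |V|` as soon as `|V| ≤ |P|`. -/
theorem second_moment {ι V : Type} [Fintype ι] [DecidableEq ι] [AddCommGroup V] [Fintype V]
    [DecidableEq V] (P : Finset (Finset ι)) (hP : (Fintype.card V : ℝ) ≤ P.card) :
    (Fintype.card V : ℝ) *
      ∑ g : ι → V, ∑ u : V, ((P.filter fun R => ∑ l ∈ R, g l = u).card : ℝ) ^ 2
      ≤ 2 * (P.card : ℝ) ^ 2 * (Fintype.card V : ℝ) ^ Fintype.card ι := by
  set q : ℝ := (Fintype.card V : ℝ) with hq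
  set M : ℝ := (P.card : ℝ) with hM
  set T : Finset ι → Finset ι → ℝ := fun R R' =>
    ((Finset.univ.filter fun g : ι → V => ∑ i ∈ R, g i = ∑ i ∈ R', g i).card : ℝ) with hT
  have e : ∑ g : ι → V, ∑ u : V, ((P.filter fun R => ∑ l ∈ R, g l = u).card : ℝ) ^ 2
      = ∑ R ∈ P, ∑ R' ∈ P, T R R' := by
    have e1 : ∀ g : ι → V, ∑ u : V, ((P.filter fun R => ∑ l ∈ R, g l = u).card : ℝ) ^ 2
        = ∑ R ∈ P, ∑ R' ∈ P, if ∑ i ∈ R, g i = ∑ i ∈ R', g i then (1 : ℝ) else 0 := by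
      intro g
      have e2 : ∀ u : V, ((P.filter fun R => ∑ l ∈ R, g l = u).card : ℝ) ^ 2
          = ∑ R ∈ P.filter (fun R => ∑ l ∈ R, g l = u),
              ∑ R' ∈ P, if ∑ i ∈ R, g i = ∑ i ∈ R', g i then (1 : ℝ) else 0 := by
        intro u
        rw [Finset.sum_congr rfl
          (g := fun _ => ((P.filter fun R => ∑ l ∈ R, g l = u).card : ℝ)),
          Finset.sum_const, nsmul_eq_mul, sq]
        intro R hR
        rw [(Finset.mem_filter.1 hR).2, Finset.sum_boole]
        simp_rw [eq_comm (a := u)]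
      rw [Finset.sum_congr rfl fun u _ => e2 u, Finset.sum_fiberwise]
    rw [Finset.sum_congr rfl fun g _ => e1 g, Finset.sum_comm]
    refine Finset.sum_congr rfl fun R _ => ?_
    rw [Finset.sum_comm]
    refine Finset.sum_congr rfl fun R' _ => ?_
    rw [Finset.sum_boole]
  have hdiag : ∀ R, T R R = q ^ Fintype.card ι := by
    intro R
    simp only [hT, hq, Finset.filter_true, Finset.card_univ, Fintype.card_fun]
    push_cast
    rfl
  have hoff : ∀ R R', R ≠ R' → q * T R R' ≤ q ^ Fintype.card ι := by
    intro R R' h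
    have := card_collision (V := V) h
    simp only [hT, hq]
    exact_mod_cast this
  rw [e, Finset.mul_sum]
  have hrow : ∀ R ∈ P, q * ∑ R' ∈ P, T R R' ≤ 2 * M * q ^ Fintype.card ι := by
    intro R hR
    rw [← Finset.add_sum_erase _ _ hR, mul_add, Finset.mul_sum, hdiag]
    have d : q * q ^ Fintype.card ι ≤ M * q ^ Fintype.card ι := by gcongr
    have o : ∑ R' ∈ P.erase R, q * T R R' ≤ M * q ^ Fintype.card ι := by
      calc _ ≤ ∑ R' ∈ P.erase R, q ^ Fintype.card ι :=
            Finset.sum_le_sum fun R' hR' => hoff _ _ (Finset.ne_of_mem_erase hR').symm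
        _ ≤ ∑ R' ∈ P, q ^ Fintype.card ι :=
            Finset.sum_le_sum_of_subset_of_nonneg (Finset.erase_subset _ _)
              fun _ _ _ => by positivity
        _ = _ := by rw [Finset.sum_const, nsmul_eq_mul]
    linarith
  calc _ ≤ ∑ R ∈ P, 2 * M * q ^ Fintype.card ι := Finset.sum_le_sum hrow
    _ = _ := by rw [Finset.sum_const, nsmul_eq_mul]; ring

/-- Inductive step: if a random family covers on average a proportion `δ` of the `k`-tuples from any
`n` columns, and `|V| ≤ (n + w).choose w`, then it covers on average a proportion at least `δ² / 2`
of the `(k + 1)`-tuples from any `n + w` columns. The first request is served by a set `R` of size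
`w` and the other ones from `S \ R`. -/
theorem step {ι V : Type} [Fintype ι] [DecidableEq ι] [AddCommGroup V] [Fintype V] {k n w : ℕ} {δ : ℝ}
    (hδ : 0 ≤ δ) (hM : Fintype.card V ≤ (n + w).choose w)
    (ih : ∀ S : Finset ι, S.card = n →
      δ * (Fintype.card V : ℝ) ^ (Fintype.card ι + k) ≤ ∑ g : ι → V, (covCount g S k : ℝ))
    (S : Finset ι) (hS : S.card = n + w) :
    δ ^ 2 / 2 * (Fintype.card V : ℝ) ^ (Fintype.card ι + (k + 1)) ≤
      ∑ g : ι → V, (covCount g S (k + 1) : ℝ) := by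
  classical
  set q : ℝ := (Fintype.card V : ℝ) with hq
  have hq0 : 0 < q := by rw [hq]; exact_mod_cast Fintype.card_pos
  set P := S.powersetCard w with hP
  have hPc : P.card = (n + w).choose w := by rw [hP, Finset.card_powersetCard, hS]
  set M : ℝ := (P.card : ℝ) with hMdef
  have hqM : q ≤ M := by rw [hq, hMdef, hPc]; exact_mod_cast hM
  set K : (ι → V) → V → ℝ := fun g u =>
    ((Finset.univ.filter fun v : Fin k → V => Cov g S (k + 1) (Fin.cons u v)).card : ℝ) with hK
  set N : (ι → V) → V → ℝ := fun g u => ((P.filter fun R => ∑ l ∈ R, g l = u).card : ℝ) with hN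
  have hK0 : ∀ g u, 0 ≤ K g u := fun g u => by positivity
  have hK1 : ∀ g u, K g u ≤ q ^ k := by
    intro g u
    have : (Finset.univ.filter fun v : Fin k → V => Cov g S (k + 1) (Fin.cons u v)).card
        ≤ Fintype.card V ^ k := by
      refine (Finset.card_le_univ _).trans ?_
      simp
    simp only [hK, hq]; exact_mod_cast this
  have hA : ∀ g : ι → V, (covCount g S (k + 1) : ℝ) = ∑ u, K g u := by
    intro g
    simp only [hK, covCount, Finset.card_filter]
    rw [← (Fin.consEquiv (fun _ : Fin (k + 1) => V)).sum_comp, Fintype.sum_prod_type]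
    push_cast
    rfl
  -- each pair `(g, R)` contributes the tuples whose first entry is the column sum over `R`
  have h1 : M * (δ * q ^ (Fintype.card ι + k)) ≤ ∑ g : ι → V, ∑ u, N g u * K g u := by
    calc M * (δ * q ^ (Fintype.card ι + k))
        = ∑ R ∈ P, δ * q ^ (Fintype.card ι + k) := by rw [Finset.sum_const, nsmul_eq_mul]
      _ ≤ ∑ R ∈ P, ∑ g : ι → V, (covCount g (S \ R) k : ℝ) := by
          refine Finset.sum_le_sum fun R hR => ih _ ?_
          rw [hP, Finset.mem_powersetCard] at hR
          rw [Finset.card_sdiff_of_subset hR.1, hS, hR.2]; simp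
      _ = ∑ g : ι → V, ∑ R ∈ P, (covCount g (S \ R) k : ℝ) := Finset.sum_comm
      _ ≤ ∑ g : ι → V, ∑ R ∈ P, K g (∑ l ∈ R, g l) := by
          refine Finset.sum_le_sum fun g _ => Finset.sum_le_sum fun R hR => ?_
          rw [hP, Finset.mem_powersetCard] at hR
          simp only [hK, covCount]
          exact_mod_cast Finset.card_le_card
            (Finset.monotone_filter_right _ fun v _ hv => cov_cons hR.1 hv)
      _ = ∑ g : ι → V, ∑ u, N g u * K g u := by
          refine Finset.sum_congr rfl fun g _ => ?_
          rw [← Finset.sum_fiberwise P (fun R => ∑ l ∈ R, g l)]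
          refine Finset.sum_congr rfl fun u _ => ?_
          rw [Finset.sum_congr rfl (g := fun _ => K g u), Finset.sum_const, nsmul_eq_mul]
          intro R hR
          rw [(Finset.mem_filter.1 hR).2]
  have h2 : (∑ g : ι → V, ∑ u, N g u * K g u) ^ 2 ≤
      (∑ g : ι → V, ∑ u, N g u ^ 2) * (∑ g : ι → V, ∑ u, K g u ^ 2) := by
    simp only [← Fintype.sum_prod_type']
    exact Finset.sum_mul_sq_le_sq_mul_sq _ _ _
  have h3 : ∑ g : ι → V, ∑ u, K g u ^ 2 ≤ q ^ k * ∑ g : ι → V, (covCount g S (k + 1) : ℝ) := by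
    simp only [hA, Finset.mul_sum]
    refine Finset.sum_le_sum fun g _ => Finset.sum_le_sum fun u _ => ?_
    rw [sq]
    exact mul_le_mul_of_nonneg_right (hK1 g u) (hK0 g u)
  have h4 : q * ∑ g : ι → V, ∑ u, N g u ^ 2 ≤ 2 * M ^ 2 * q ^ Fintype.card ι :=
    second_moment P hqM
  set A := ∑ g : ι → V, (covCount g S (k + 1) : ℝ) with hAdef
  have hA0 : 0 ≤ A := Finset.sum_nonneg fun g _ => Nat.cast_nonneg _
  set X := ∑ g : ι → V, ∑ u, N g u ^ 2 with hX
  have hX0 : 0 ≤ X := Finset.sum_nonneg fun g _ => Finset.sum_nonneg fun u _ => sq_nonneg _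
  have hM0 : 0 < M := hq0.trans_le hqM
  clear_value X A M q
  have h5 : q * (M * (δ * q ^ (Fintype.card ι + k))) ^ 2 ≤
      2 * M ^ 2 * q ^ Fintype.card ι * (q ^ k * A) := by
    calc q * (M * (δ * q ^ (Fintype.card ι + k))) ^ 2
        ≤ q * (X * (q ^ k * A)) := by
          gcongr
          exact (pow_le_pow_left₀ (by positivity) h1 2).trans
            (h2.trans (mul_le_mul_of_nonneg_left h3 hX0))
      _ = q * X * (q ^ k * A) := by ring
      _ ≤ _ := by gcongr
  have h6 : (2 * M ^ 2 * q ^ Fintype.card ι * q ^ k) *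
      (δ ^ 2 / 2 * q ^ (Fintype.card ι + (k + 1))) ≤
      (2 * M ^ 2 * q ^ Fintype.card ι * q ^ k) * A := by
    calc _ = q * (M * (δ * q ^ (Fintype.card ι + k))) ^ 2 := by ring
      _ ≤ _ := h5
      _ = _ := by ring
  exact le_of_mul_le_mul_left h6 (by positivity)
/-! ### Boosting the coverage -/

open Classical in
/-- The number of `k`-tuples of requests that cannot be served from all the columns of `g`. -/
noncomputable def uncov {ι V : Type} [Fintype ι] [AddCommMonoid V] [Fintype V] (g : ι → V)
    (k : ℕ) : ℕ := (Finset.univ.filter fun v : Fin k → V => ¬ Cov g Finset.univ k v).card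

theorem cov_sum_of_cov {ι κ V : Type} [Fintype ι] [Fintype κ] [AddCommMonoid V] {g : ι → V}
    {h : κ → V} {k : ℕ} {v : Fin k → V} (hv : Cov g Finset.univ k v) :
    Cov (Sum.elim g h) Finset.univ k v := by
  obtain ⟨R, -, hd, hs⟩ := hv
  refine ⟨fun j => (R j).map Function.Embedding.inl, fun j => Finset.subset_univ _, ?_, ?_⟩
  · intro j j' hjj
    exact (Finset.disjoint_map _).2 (hd j j' hjj)
  · intro j
    simpa using hs j

/-- The additional columns `h` serve the tuple `v` as soon as `g` serves `v - h`: the `j`-th new column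
is added to the `j`-th set. -/
theorem cov_sum_of_cov_sub {ι V : Type} [Fintype ι] [AddCommGroup V] {g : ι → V} {k : ℕ}
    {h : Fin k → V} {v : Fin k → V} (hv : Cov g Finset.univ k (v - h)) :
    Cov (Sum.elim g h) Finset.univ k v := by
  obtain ⟨R, -, hd, hs⟩ := hv
  refine ⟨fun j => (R j).disjSum {j}, fun j => Finset.subset_univ _, ?_, ?_⟩
  · intro j j' hjj
    rw [Finset.disjoint_left]
    rintro (a | a) ha ha'
    · simp only [Finset.inl_mem_disjSum] at ha ha'
      exact Finset.disjoint_left.1 (hd j j' hjj) ha ha'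
    · simp only [Finset.inr_mem_disjSum, Finset.mem_singleton] at ha ha'
      exact hjj (ha.symm.trans ha')
  · intro j
    simp [Finset.sum_disjSum, hs j]

/-- Some choice of `k` additional columns squares the proportion of uncovered tuples: a tuple `v` stays
uncovered only if both `v` and `v - h` were, and the average over `h` is taken. -/
theorem boost_step {ι V : Type} [Fintype ι] [AddCommGroup V] [Fintype V] (g : ι → V) (k : ℕ) :
    ∃ h : Fin k → V,
      uncov (Sum.elim g h) k * Fintype.card V ^ k ≤ uncov g k ^ 2 := by
  classical
  set U := Finset.univ.filter fun v : Fin k → V => ¬ Cov g Finset.univ k v with hU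
  have hsub : ∀ h : Fin k → V, uncov (Sum.elim g h) k ≤ (U.filter fun v => v - h ∈ U).card := by
    intro h
    refine Finset.card_le_card fun v hv => ?_
    simp only [Finset.mem_filter, Finset.mem_univ, true_and, hU] at hv ⊢
    exact ⟨fun c => hv (cov_sum_of_cov c), fun c => hv (cov_sum_of_cov_sub c)⟩
  have hsum : ∑ h : Fin k → V, (U.filter fun v => v - h ∈ U).card = U.card ^ 2 := by
    simp only [Finset.card_filter]
    rw [Finset.sum_comm, sq, ← smul_eq_mul, ← Finset.sum_const]
    refine Finset.sum_congr rfl fun v _ => ?_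
    have := (Equiv.subLeft v).sum_comp (fun w => if w ∈ U then 1 else 0)
    simp only [Equiv.subLeft_apply] at this
    rw [this]
    simp
  by_contra! hcon
  have hc : Fintype.card (Fin k → V) = Fintype.card V ^ k := by simp
  have : ∑ h : Fin k → V, U.card ^ 2 <
      ∑ h : Fin k → V, uncov (Sum.elim g h) k * Fintype.card V ^ k :=
    Finset.sum_lt_sum_of_nonempty Finset.univ_nonempty fun h _ => hcon h
  rw [Finset.sum_const, Finset.card_univ, hc, smul_eq_mul, ← Finset.sum_mul, mul_comm] at this
  have h2 := Finset.sum_le_sum fun h (_ : h ∈ Finset.univ) => hsub h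
  rw [hsum] at h2
  exact absurd this (not_lt.2 (Nat.mul_le_mul_right _ h2))

theorem boost {V : Type} [AddCommGroup V] [Fintype V] (k t : ℕ) {r : ℝ}
    (n : ℕ) {ι : Type} [Fintype ι] (hn : Fintype.card ι = n) (g : ι → V)
    (hg : (uncov g k : ℝ) ≤ r * (Fintype.card V : ℝ) ^ k) :
    ∃ (ι' : Type) (_ : Fintype ι') (g' : ι' → V), Fintype.card ι' = n + k * t ∧
      (uncov g' k : ℝ) ≤ r ^ 2 ^ t * (Fintype.card V : ℝ) ^ k := by
  induction t with
  | zero => exact ⟨ι, inferInstance, g, by simpa using hn, by simpa using hg⟩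
  | succ t ih =>
    obtain ⟨ι', _, g', hc, hg'⟩ := ih
    obtain ⟨h, hh⟩ := boost_step g' k
    refine ⟨ι' ⊕ Fin k, inferInstance, Sum.elim g' h, ?_, ?_⟩
    · rw [Fintype.card_sum, hc, Fintype.card_fin]; ring
    · have hq : (0 : ℝ) < (Fintype.card V : ℝ) ^ k := by
        have : 0 < Fintype.card V := Fintype.card_pos
        positivity
      have hh' : (uncov (Sum.elim g' h) k : ℝ) * (Fintype.card V : ℝ) ^ k
          ≤ (uncov g' k : ℝ) ^ 2 := by exact_mod_cast hh
      refine le_of_mul_le_mul_right (hh'.trans ?_) hq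
      calc (uncov g' k : ℝ) ^ 2 ≤ (r ^ 2 ^ t * (Fintype.card V : ℝ) ^ k) ^ 2 :=
            pow_le_pow_left₀ (Nat.cast_nonneg _) hg' 2
        _ = _ := by rw [pow_succ 2 t, pow_mul]; ring

theorem FB_le_of_uncov {ι : Type} [Fintype ι] {s k : ℕ} (g : ι → (Fin s → ZMod 2))
    (hg : uncov g k = 0) : FB s k ≤ Fintype.card ι := by
  classical
  let e := Fintype.equivFin ι
  refine Nat.sInf_le ⟨fun i l => g (e.symm l) i, fun v _ => ?_⟩
  have hv : Cov g Finset.univ k v := by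
    by_contra hv
    have := Finset.card_eq_zero.1 hg
    exact Finset.notMem_empty v (this ▸ Finset.mem_filter.2 ⟨Finset.mem_univ _, hv⟩)
  obtain ⟨R, -, hd, hs⟩ := hv
  refine ⟨fun j => (R j).map e.toEmbedding, fun j j' h => (Finset.disjoint_map _).2 (hd j j' h),
    fun j i => ?_⟩
  rw [Finset.sum_map, ← hs j, Finset.sum_apply]
  simp

/-! ### Average coverage and functional batch codes -/

/-- For any `n` available columns in a uniformly random family of columns in `F_2^s`, the average
proportion of `k`-tuples of requests that can be served is at least `δ`. The ambient index type `ι`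
may be larger than the set `S` of available columns, so that columns can be set aside without
restricting the family. -/
def AvgCov (s k n : ℕ) (δ : ℝ) : Prop :=
  ∀ (ι : Type) [Fintype ι] [DecidableEq ι] (S : Finset ι), S.card = n →
    δ * ((2 : ℝ) ^ s) ^ (Fintype.card ι + k) ≤
      ∑ g : ι → (Fin s → ZMod 2), (covCount g S k : ℝ)

theorem card_space (s : ℕ) : Fintype.card (Fin s → ZMod 2) = 2 ^ s := by simp [ZMod.card]

theorem AvgCov.zero (s n : ℕ) : AvgCov s 0 n 1 := by
  intro ι _ _ S _
  have h1 : ∀ g : ι → (Fin s → ZMod 2), covCount g S 0 = 1 := by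
    intro g
    classical
    rw [covCount, Finset.filter_true_of_mem, Finset.card_univ]
    · simp
    · intro v _
      exact ⟨fun _ => ∅, fun j => j.elim0, fun j => j.elim0, fun j => j.elim0⟩
  simp [h1]

theorem AvgCov.succ {s k n m : ℕ} {δ : ℝ} (hδ : 0 ≤ δ) (hm : m ≤ n) (hM : 2 ^ s ≤ n.choose m)
    (h : AvgCov s k m δ) : AvgCov s (k + 1) n (δ ^ 2 / 2) := by
  intro ι _ _ S hS
  have := step (ι := ι) (V := Fin s → ZMod 2) (k := k) (n := m) (w := n - m) hδ
    (by rw [card_space, Nat.add_sub_cancel' hm, Nat.choose_symm hm]; exact hM)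
    (by intro S hS; have := h ι S hS; rw [card_space]; push_cast; exact this) S (by omega)
  rw [card_space] at this
  push_cast at this
  exact this

/-- A family of `n` columns covering a proportion `δ` of the tuples becomes a functional batch code
after `t` boosting rounds: the uncovered proportion is at most `(1 - δ) ^ 2 ^ t`, and it vanishes
once it is less than `2 ^ (-s k)`. -/
theorem FB_le_of_avgCov {s k n : ℕ} {δ : ℝ} (h : AvgCov s k n δ) (t : ℕ) (hδ1 : δ ≤ 1)
    (ht : (s * k : ℝ) < 2 ^ t * δ) : FB s k ≤ n + k * t := by
  classical
  have h0 := h (Fin n) Finset.univ (by simp)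
  -- some matrix covers at least the average proportion of tuples
  obtain ⟨g, hg⟩ : ∃ g : Fin n → (Fin s → ZMod 2),
      δ * ((2 : ℝ) ^ s) ^ k ≤ covCount g Finset.univ k := by
    by_contra! hcon
    have := Finset.sum_lt_sum_of_nonempty (s := Finset.univ) Finset.univ_nonempty
      fun g _ => hcon g
    rw [Finset.sum_const, Finset.card_univ, Fintype.card_fun, card_space, nsmul_eq_mul,
      Fintype.card_fin] at this
    rw [Fintype.card_fin] at h0
    refine absurd this (not_lt.2 (le_trans (le_of_eq ?_) h0))
    push_cast
    ring
  have hq : ((Fintype.card (Fin s → ZMod 2) : ℕ) : ℝ) = 2 ^ s := by rw [card_space]; push_cast; rfl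
  have hun : (uncov g k : ℝ) ≤ (1 - δ) * ((Fintype.card (Fin s → ZMod 2) : ℕ) : ℝ) ^ k := by
    have := Finset.card_filter_add_card_filter_not (s := Finset.univ)
      (fun v : Fin k → (Fin s → ZMod 2) => Cov g Finset.univ k v)
    rw [Finset.card_univ, Fintype.card_fun, card_space, Fintype.card_fin] at this
    have h2 : (covCount g Finset.univ k : ℝ) + uncov g k = (2 ^ s) ^ k := by
      rw [covCount, uncov]; exact_mod_cast this
    rw [hq]; linarith
  obtain ⟨ι', _, g', hc, hg'⟩ := boost k t n (by simp) g hun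
  rw [← hc]
  refine FB_le_of_uncov g' ?_
  have hlt : (uncov g' k : ℝ) < 1 := by
    refine hg'.trans_lt ?_
    have e1 : (1 - δ) ^ 2 ^ t ≤ Real.exp (-(2 ^ t * δ)) := by
      calc (1 - δ) ^ 2 ^ t ≤ Real.exp (-δ) ^ 2 ^ t :=
            pow_le_pow_left₀ (by linarith) (Real.one_sub_le_exp_neg δ) _
        _ = _ := by rw [← Real.exp_nat_mul]; push_cast; ring_nf
    have e2 : ((2 : ℝ) ^ s) ^ k ≤ Real.exp (s * k) := by
      rw [← pow_mul]
      calc (2 : ℝ) ^ (s * k) ≤ Real.exp 1 ^ (s * k) :=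
            pow_le_pow_left₀ (by norm_num) (by have := Real.add_one_le_exp 1; linarith) _
        _ = _ := by rw [← Real.exp_nat_mul]; push_cast; ring_nf
    rw [hq]
    calc _ ≤ Real.exp (-(2 ^ t * δ)) * Real.exp (s * k) := by gcongr
      _ = Real.exp (-(2 ^ t * δ) + s * k) := by rw [Real.exp_add]
      _ < 1 := by rw [Real.exp_lt_one_iff]; linarith
  have : uncov g' k < 1 := by exact_mod_cast hlt
  omega
/-! ### Entropy asymptotics of binomial coefficients -/

theorem binEnt_eq (p : ℝ) : binEnt p = Real.binEntropy p / Real.log 2 := by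
  rw [binEnt, Real.binEntropy_eq_negMulLog_add_negMulLog_one_sub, Real.logb, Real.logb,
    Real.negMulLog, Real.negMulLog]
  ring

theorem log_factorial_le {n : ℕ} (hn : 0 < n) :
    Real.log n.factorial ≤ n * Real.log n - n + 1 + Real.log n / 2 := by
  obtain ⟨m, rfl⟩ : ∃ m, n = m + 1 := ⟨n - 1, by omega⟩
  have h1 := Stirling.log_stirlingSeq'_antitone (Nat.zero_le m)
  simp only [Function.comp, Nat.succ_eq_add_one, zero_add] at h1
  rw [Stirling.log_stirlingSeq_formula, Stirling.log_stirlingSeq_formula] at h1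
  have hm : ((m + 1 : ℕ) : ℝ) ≠ 0 := by positivity
  rw [Real.log_mul two_ne_zero hm, Real.log_div hm (Real.exp_pos 1).ne'] at h1
  simp at h1
  push_cast
  nlinarith

theorem le_log_factorial (n : ℕ) : n * Real.log n - n ≤ Real.log n.factorial := by
  rcases Nat.eq_zero_or_pos n with rfl | hn
  · simp
  have h := Stirling.le_log_factorial_stirling hn.ne'
  have h1 : 0 ≤ Real.log n := Real.log_natCast_nonneg n
  have h2 : 0 ≤ Real.log (2 * Real.pi) := Real.log_nonneg (by nlinarith [Real.pi_gt_three])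
  linarith

/-- Entropy lower bound for binomial coefficients, in nats, with a logarithmic error term. -/
theorem log_choose_ge {n m : ℕ} (hm : 0 < m) (hmn : m < n) :
    n * Real.binEntropy (m / n) - 2 - Real.log n ≤ Real.log (n.choose m) := by
  obtain ⟨w, rfl⟩ : ∃ w, n = m + w := ⟨n - m, by omega⟩
  have hw : 0 < w := by omega
  have hm' : (0 : ℝ) < m := by exact_mod_cast hm
  have hw' : (0 : ℝ) < w := by exact_mod_cast hw
  have h1 := log_factorial_le hm
  have h2 := log_factorial_le hw
  have h3 := le_log_factorial (m + w)
  have h4 : Real.log (((m + w).choose m : ℕ) : ℝ) + Real.log m.factorial + Real.log w.factorial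
      = Real.log (m + w).factorial := by
    have c0 : (((m + w).choose m : ℕ) : ℝ) ≠ 0 := by
      exact_mod_cast (Nat.choose_pos (Nat.le_add_right m w)).ne'
    have := Nat.add_choose_mul_factorial_mul_factorial m w
    rw [← Nat.choose_symm_add] at this
    rw [← this, Nat.cast_mul, Nat.cast_mul,
      Real.log_mul (mul_ne_zero c0 (by positivity)) (by positivity),
      Real.log_mul c0 (by positivity)]
  have h5 : Real.log m ≤ Real.log (m + w) := Real.log_le_log hm' (by linarith)
  have h6 : Real.log w ≤ Real.log (m + w) := Real.log_le_log hw' (by linarith)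
  have h7 : ((m + w : ℕ) : ℝ) * Real.binEntropy (m / (m + w : ℕ)) =
      (m + w) * Real.log (m + w) - m * Real.log m - w * Real.log w := by
    have e : 1 - (m : ℝ) / (m + w) = w / (m + w) := by field_simp; ring
    push_cast
    rw [Real.binEntropy_eq_negMulLog_add_negMulLog_one_sub, Real.negMulLog, Real.negMulLog, e,
      Real.log_div hm'.ne' (by positivity), Real.log_div hw'.ne' (by positivity)]
    field_simp
    ring
  rw [h7]
  push_cast at h3 ⊢
  linarith

open Filter Topology in
/-- Beyond the length `s / binEnt c`, there are at least `2 ^ s` sets of columns of relative size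
about `c`; `⌈x (1 - c) s⌉` is the number of columns outside such a set. -/
theorem eventually_choose {c x : ℝ} (hc0 : 0 < c) (hc1 : c < 1) (hx : 1 / binEnt c < x) :
    ∀ᶠ s : ℕ in atTop, ⌈x * (1 - c) * s⌉₊ ≤ ⌈x * s⌉₊ ∧
      2 ^ s ≤ (⌈x * s⌉₊).choose ⌈x * (1 - c) * s⌉₊ := by
  have hl2 : 0 < Real.log 2 := Real.log_pos one_lt_two
  have hH : 0 < Real.binEntropy c := Real.binEntropy_pos hc0 hc1
  have hb : 0 < binEnt c := by rw [binEnt_eq]; positivity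
  have hx0 : 0 < x := lt_trans (by positivity) hx
  have hc1' : 0 < 1 - c := by linarith
  have hs : Tendsto (fun s : ℕ => (s : ℝ)) atTop atTop := tendsto_natCast_atTop_atTop
  have tn : Tendsto (fun s : ℕ => (⌈x * s⌉₊ : ℝ) / s) atTop (𝓝 x) :=
    (tendsto_nat_ceil_mul_div_atTop hx0.le).comp hs
  have tm : Tendsto (fun s : ℕ => (⌈x * (1 - c) * s⌉₊ : ℝ) / s) atTop (𝓝 (x * (1 - c))) :=
    (tendsto_nat_ceil_mul_div_atTop (by positivity)).comp hs
  have tr : Tendsto (fun s : ℕ => (⌈x * (1 - c) * s⌉₊ : ℝ) / ⌈x * s⌉₊) atTop (𝓝 (1 - c)) := by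
    have := tm.div tn hx0.ne'
    rw [mul_div_cancel_left₀ _ hx0.ne'] at this
    refine this.congr' ?_
    filter_upwards [eventually_gt_atTop 0] with s hs0
    have : (s : ℝ) ≠ 0 := by positivity
    simp only [Pi.div_apply]
    rw [div_div_div_cancel_right₀ this]
  have tb : Tendsto (fun s : ℕ => Real.binEntropy ((⌈x * (1 - c) * s⌉₊ : ℝ) / ⌈x * s⌉₊)) atTop
      (𝓝 (Real.binEntropy c)) := by
    have := (Real.binEntropy_continuous.tendsto (1 - c)).comp tr
    rwa [Real.binEntropy_one_sub] at this
  have tN : Tendsto (fun s : ℕ => ⌈x * s⌉₊) atTop atTop :=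
    tendsto_nat_ceil_atTop.comp (hs.const_mul_atTop hx0)
  have tl : Tendsto (fun s : ℕ => (2 + Real.log ⌈x * s⌉₊) / (⌈x * s⌉₊ : ℝ)) atTop (𝓝 0) := by
    have h1 : Tendsto (fun y : ℝ => (2 + Real.log y) / y) atTop (𝓝 0) := by
      have a := tendsto_const_nhds (x := (2 : ℝ)).div_atTop tendsto_id
      have b : Tendsto (fun y : ℝ => Real.log y / y) atTop (𝓝 0) := by
        simpa using Real.isLittleO_log_id_atTop.tendsto_div_nhds_zero
      simpa [add_div] using a.add b
    exact h1.comp (tendsto_natCast_atTop_atTop.comp tN)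
  have tt := tn.mul (tb.sub tl)
  rw [sub_zero] at tt
  have hlim : Real.log 2 < x * Real.binEntropy c := by
    rw [binEnt_eq, one_div_div, div_lt_iff₀ hH] at hx
    exact hx
  filter_upwards [tt.eventually_const_lt hlim, eventually_gt_atTop 0,
    tr.eventually_lt_const (show 1 - c < 1 by linarith)] with s h1 hs0 h2
  have hs0' : (0 : ℝ) < s := by exact_mod_cast hs0
  have hm0 : 0 < ⌈x * (1 - c) * s⌉₊ := Nat.ceil_pos.2 (by positivity)
  have hn0 : 0 < ⌈x * s⌉₊ := Nat.ceil_pos.2 (by positivity)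
  have hn0' : (0 : ℝ) < ⌈x * s⌉₊ := by exact_mod_cast hn0
  have hmn : ⌈x * (1 - c) * s⌉₊ < ⌈x * s⌉₊ := by
    rw [div_lt_one hn0'] at h2
    exact_mod_cast h2
  refine ⟨hmn.le, ?_⟩
  have h3 := log_choose_ge hm0 hmn
  set n := ⌈x * s⌉₊
  set m := ⌈x * (1 - c) * s⌉₊
  have h4 : s * Real.log 2 < n * Real.binEntropy (m / n) - (2 + Real.log n) := by
    have e : (n : ℝ) / s * (Real.binEntropy (m / n) - (2 + Real.log n) / n)
        = (n * Real.binEntropy (m / n) - (2 + Real.log n)) / s := by field_simp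
    rw [e, lt_div_iff₀ hs0'] at h1
    linarith
  have h5 : Real.log ((2 : ℝ) ^ s) ≤ Real.log (n.choose m) := by
    rw [Real.log_pow]; linarith
  rw [Real.log_le_log_iff (by positivity) (by exact_mod_cast Nat.choose_pos hmn.le)] at h5
  exact_mod_cast h5
/-! ### Asymptotic length -/

open Filter Topology in
/-- Iteration of `AvgCov.succ`: with `⌈x s⌉` columns, one of `j + 1` requests uses a proportion
`c (j + 1)` of them and leaves `⌈x (1 - c (j + 1)) s⌉` columns for the other `j` requests. The
recursion on `h` says that `x > 1 / h (j + 1)` is exactly `x (1 - c (j + 1)) > 1 / h j`. -/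
theorem exists_avgCov (k : ℕ) (c h : ℕ → ℝ) (h0 : 0 < h 0)
    (hc : ∀ j < k, 0 < c (j + 1) ∧ c (j + 1) < 1)
    (hh : ∀ j < k, h (j + 1) = binEnt (c (j + 1)) ∧ h (j + 1) = h j * (1 - c (j + 1))) :
    ∀ j ≤ k, 0 < h j ∧ ∀ x, 1 / h j < x →
      ∃ δ : ℝ, 0 < δ ∧ δ ≤ 1 ∧ ∀ᶠ s : ℕ in atTop, AvgCov s j ⌈x * s⌉₊ δ := by
  intro j
  induction j with
  | zero =>
    exact fun _ => ⟨h0, fun x _ => ⟨1, one_pos, le_rfl, Eventually.of_forall fun s =>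
      AvgCov.zero s _⟩⟩
  | succ j ih =>
    intro hj
    obtain ⟨hpos, ih⟩ := ih (by omega)
    obtain ⟨hc0, hc1⟩ := hc j (by omega)
    obtain ⟨hb, hr⟩ := hh j (by omega)
    have hc' : 0 < 1 - c (j + 1) := by linarith
    refine ⟨by rw [hr]; positivity, fun x hx => ?_⟩
    obtain ⟨δ, hδ0, hδ1, hδ⟩ := ih (x * (1 - c (j + 1))) (by
      rw [hr, div_lt_iff₀ (by positivity)] at hx
      rw [div_lt_iff₀ hpos]
      linarith)
    refine ⟨δ ^ 2 / 2, by positivity, by nlinarith, ?_⟩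
    filter_upwards [hδ, eventually_choose hc0 hc1 (hb ▸ hx)] with s h1 h2
    exact AvgCov.succ hδ0.le h2.1 h2.2 h1

open Filter Topology in
theorem limsup_FB_le {k : ℕ} {x δ : ℝ} (hx : 0 ≤ x) (hδ0 : 0 < δ) (hδ1 : δ ≤ 1)
    (h : ∀ᶠ s : ℕ in atTop, AvgCov s k ⌈x * s⌉₊ δ) {a : ℝ} (hxa : x < a) :
    ∀ᶠ s : ℕ in atTop, (FB s k : ℝ) / s ≤ a := by
  -- the number of boosting rounds is `⌈ε s⌉`, with `ε` small enough to cost less than `a - x`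
  obtain ⟨ε, hε, hεa⟩ : ∃ ε : ℝ, 0 < ε ∧ x + k * ε < a := by
    refine ⟨(a - x) / (2 * (k + 1)), by have := sub_pos.2 hxa; positivity, ?_⟩
    have : k * ((a - x) / (2 * (k + 1))) = (a - x) * (k / (2 * (k + 1))) := by ring
    have h2 : (k : ℝ) / (2 * (k + 1)) < 1 := by
      rw [div_lt_one (by positivity)]
      have : (0 : ℝ) ≤ k := by positivity
      linarith
    rw [this]
    nlinarith [sub_pos.2 hxa]
  have hs : Tendsto (fun s : ℕ => (s : ℝ)) atTop atTop := tendsto_natCast_atTop_atTop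
  have tn : Tendsto (fun s : ℕ => (⌈x * s⌉₊ : ℝ) / s) atTop (𝓝 x) :=
    (tendsto_nat_ceil_mul_div_atTop hx).comp hs
  have te : Tendsto (fun s : ℕ => (⌈ε * s⌉₊ : ℝ) / s) atTop (𝓝 ε) :=
    (tendsto_nat_ceil_mul_div_atTop hε.le).comp hs
  have hr : (1 : ℝ) < 2 ^ ε := Real.one_lt_rpow one_lt_two hε
  have tp := (tendsto_pow_const_div_const_pow_of_one_lt 1 hr).const_mul ((k : ℝ) / δ)
  rw [mul_zero] at tp
  filter_upwards [h, (tn.add (te.const_mul (k : ℝ))).eventually_lt_const hεa,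
    tp.eventually_lt_const one_pos, eventually_gt_atTop 0] with s h1 h2 h3 hs0
  have hs0' : (0 : ℝ) < s := by exact_mod_cast hs0
  have h4 : (s * k : ℝ) < 2 ^ ⌈ε * s⌉₊ * δ := by
    have e : (k : ℝ) / δ * ((s : ℝ) ^ 1 / (2 ^ ε) ^ s) = s * k / ((2 ^ ε) ^ s * δ) := by
      field_simp
    rw [e, div_lt_one (by positivity)] at h3
    refine h3.trans_le (mul_le_mul_of_nonneg_right ?_ hδ0.le)
    rw [← Real.rpow_natCast, ← Real.rpow_mul zero_le_two, ← Real.rpow_natCast 2]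
    exact Real.rpow_le_rpow_of_exponent_le one_le_two (Nat.le_ceil _)
  have h5 : (FB s k : ℝ) ≤ ⌈x * s⌉₊ + k * ⌈ε * s⌉₊ := by
    exact_mod_cast FB_le_of_avgCov h1 _ hδ1 h4
  calc (FB s k : ℝ) / s ≤ (⌈x * s⌉₊ + k * ⌈ε * s⌉₊) / s := by gcongr
    _ = (⌈x * s⌉₊ : ℝ) / s + k * (⌈ε * s⌉₊ / s) := by ring
    _ ≤ a := h2.le

theorem FB_limsup_upper (k : ℕ) (hk : 1 ≤ k) (c : ℕ → ℝ)
    (hmem : ∀ j, 1 ≤ j → j ≤ k → c j ∈ Set.Ioc (0 : ℝ) (1 / 2))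
    (hc1 : c 1 = 1 / 2)
    (hrec : ∀ j, 1 ≤ j → j < k →
      c (j + 1) ∈ Set.Ioo (0 : ℝ) (1 / 2) ∧
      binEnt (c (j + 1)) = binEnt (c j) * (1 - c (j + 1))) :
    Filter.limsup (fun s : ℕ => (FB s k : ℝ) / (s : ℝ)) Filter.atTop ≤ 1 / binEnt (c k) := by
  -- with `h 0 = 2` the recursion for the entropies also holds at the initial value `c 1 = 1 / 2`
  have key := exists_avgCov k c (fun j => if j = 0 then 2 else binEnt (c j)) (by norm_num)
    (fun j hj => by
      have := hmem (j + 1) (by omega) (by omega)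
      exact ⟨this.1, by linarith [this.2]⟩)
    (fun j hj => by
      refine ⟨by simp, ?_⟩
      rcases Nat.eq_zero_or_pos j with rfl | hj0
      · have hl2 : Real.log 2 ≠ 0 := (Real.log_pos one_lt_two).ne'
        simp only [zero_add, one_ne_zero, if_false, if_true, hc1, binEnt_eq, one_div,
          Real.binEntropy_two_inv, div_self hl2]
        norm_num
      · simpa [hj0.ne'] using (hrec j hj0 hj).2) k le_rfl
  simp only [show k ≠ 0 by omega, if_false] at key
  obtain ⟨hpos, key⟩ := key
  refine le_of_forall_gt_imp_ge_of_dense fun a ha => ?_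
  obtain ⟨x, hx, hxa⟩ := exists_between ha
  obtain ⟨δ, hδ0, hδ1, hδ⟩ := key x hx
  have hx0 : 0 ≤ x := (one_div_pos.2 hpos).le.trans hx.le
  refine Filter.limsup_le_of_le ?_ (limsup_FB_le hx0 hδ0 hδ1 hδ hxa)
  exact Filter.IsBoundedUnder.isCoboundedUnder_le
    ⟨0, Filter.eventually_map.2 (Filter.Eventually.of_forall fun s => by positivity)⟩
end

section
/- For every fixed integer k ≥ 1, the liminf as s tends to infinity of FB(s,k)/s is at least k/log₂(k+1). -/
/-!
The lower bound is a counting argument. A family of `k` pairwise disjoint sets of columns is the same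
thing as a labelling of each of the `n` columns by one of `k` set names or as unused, so there are
`(k + 1) ^ n` of them, and each one serves a single tuple of requests. Since there are
`(2 ^ s - 1) ^ k` tuples of nonzero requests, every functional `k`-batch code of length `n` satisfies
`(2 ^ s - 1) ^ k ≤ (k + 1) ^ n` (`IsFunctionalBatch.card_le`). Taking logarithms and using
`2 ^ (s - 1) ≤ 2 ^ s - 1` gives `FB s k / s ≥ (k / log₂ (k + 1)) * (1 - 1 / s)`, whose right-hand side
tends to `k / log₂ (k + 1)`.

The code consisting of `k` copies of the identity matrix (`isFunctionalBatch_copies`) shows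
`FB s k ≤ s * k`. It makes the infimum defining `FB` one over a nonempty set, and it bounds the
sequence `FB s k / s` from above, so that its real-valued `liminf` is not a junk value.
-/

open scoped BigOperators

/-- The number of tuples of nonzero requests is at most the number of labellings of the columns by
`Option (Fin k)`, the label `none` marking a column that is not used. -/
lemma IsFunctionalBatch.card_le {s n k : ℕ} {G : Matrix (Fin s) (Fin n) (ZMod 2)}
    (hG : IsFunctionalBatch s n k G) : (2 ^ s - 1) ^ k ≤ (k + 1) ^ n := by
  classical
  have key : ∀ v : Fin k → {w : Fin s → ZMod 2 // w ≠ 0}, ∃ a : Fin n → Option (Fin k),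
      ∀ j i, ∑ l with a l = some j, G i l = (v j).1 i := by
    intro v
    obtain ⟨R, hd, hR⟩ := hG (fun j => (v j).1) (fun j => (v j).2)
    refine ⟨fun l => if h : ∃ j, l ∈ R j then some h.choose else none, fun j i => ?_⟩
    rw [← hR j i]
    refine Finset.sum_congr ?_ fun _ _ => rfl
    ext l
    simp only [Finset.mem_filter, Finset.mem_univ, true_and]
    constructor
    · intro h
      split_ifs at h with h'
      rw [Option.some_inj] at h
      exact h ▸ h'.choose_spec
    · intro h
      have h' : ∃ j, l ∈ R j := ⟨j, h⟩
      rw [dif_pos h', Option.some_inj]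
      by_contra hne
      exact Finset.disjoint_left.mp (hd _ _ hne) h'.choose_spec h
  choose F hF using key
  have hinj : Function.Injective F := by
    intro v w h
    funext j
    apply Subtype.ext
    funext i
    rw [← hF v j i, ← hF w j i, h]
  have := Fintype.card_le_of_injective F hinj
  simpa [Fintype.card_subtype_compl] using this

/-- The matrix made of `k` copies of the identity, with columns indexed by pairs
`(row, copy)`, serves the `j`-th request from the `j`-th copy. -/
lemma isFunctionalBatch_copies (s k : ℕ) :
    IsFunctionalBatch s (s * k) k
      (fun i l => if (finProdFinEquiv.symm l).1 = i then 1 else 0) := by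
  intro v _
  refine ⟨fun j => {l | (finProdFinEquiv.symm l).2 = j ∧ v j (finProdFinEquiv.symm l).1 ≠ 0},
    fun j j' hne => ?_, fun j i => ?_⟩
  · rw [Finset.disjoint_left]
    intro l h h'
    simp only [Finset.mem_filter, Finset.mem_univ, true_and] at h h'
    exact hne (h.1.symm.trans h'.1)
  · rw [Finset.sum_filter, ← finProdFinEquiv.sum_comp]
    simp only [Equiv.symm_apply_apply, Fintype.sum_prod_type]
    rw [Finset.sum_eq_single i (fun b _ hb => by simp [hb]) (by simp),
      Finset.sum_eq_single j (fun b _ hb => by simp [hb]) (by simp)]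
    by_cases h : v j i = 0
    · simp [h]
    · have h1 : v j i = 1 := Fin.eq_one_of_ne_zero (v j i) h
      rw [if_pos ⟨rfl, h⟩, if_pos rfl, h1]

lemma FB_le (s k : ℕ) : FB s k ≤ s * k :=
  Nat.sInf_le ⟨_, isFunctionalBatch_copies s k⟩

lemma card_le_FB (s k : ℕ) : (2 ^ s - 1) ^ k ≤ (k + 1) ^ FB s k := by
  obtain ⟨G, hG⟩ := Nat.sInf_mem
    (s := {n : ℕ | ∃ G : Matrix (Fin s) (Fin n) (ZMod 2), IsFunctionalBatch s n k G})
    ⟨_, _, isFunctionalBatch_copies s k⟩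
  exact hG.card_le

lemma FB_div_ge (s k : ℕ) (hs : 1 ≤ s) (hk : 1 ≤ k) :
    (k : ℝ) / Real.logb 2 ((k : ℝ) + 1) * (1 - 1 / (s : ℝ)) ≤ (FB s k : ℝ) / (s : ℝ) := by
  have hL : 0 < Real.logb 2 ((k : ℝ) + 1) := by
    apply Real.logb_pos (by norm_num)
    have : (1 : ℝ) ≤ k := by exact_mod_cast hk
    linarith
  have hs0 : (0 : ℝ) < s := by exact_mod_cast hs
  have h2 : 2 ^ ((s - 1) * k) ≤ (k + 1) ^ FB s k := by
    refine le_trans ?_ (card_le_FB s k)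
    rw [pow_mul]
    refine Nat.pow_le_pow_left ?_ k
    obtain ⟨t, rfl⟩ := Nat.exists_eq_add_of_le' hs
    have := Nat.one_le_two_pow (n := t)
    rw [Nat.add_sub_cancel, pow_succ]
    omega
  have h3 : ((s : ℝ) - 1) * k ≤ FB s k * Real.logb 2 ((k : ℝ) + 1) := by
    have h4 : (2 : ℝ) ^ ((s - 1) * k) ≤ ((k : ℝ) + 1) ^ FB s k := by exact_mod_cast h2
    have h5 := Real.logb_le_logb_of_le (b := 2) (by norm_num) (by positivity) h4
    rw [Real.logb_pow, Real.logb_pow, Real.logb_self_eq_one (by norm_num)] at h5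
    push_cast [Nat.cast_sub hs] at h5
    linarith
  have h6 : (k : ℝ) / Real.logb 2 ((k : ℝ) + 1) * (1 - 1 / (s : ℝ))
      = (((s : ℝ) - 1) * k / Real.logb 2 ((k : ℝ) + 1)) / s := by
    field_simp
  rw [h6]
  gcongr
  rwa [div_le_iff₀ hL]

theorem FB_liminf_lower (k : ℕ) (hk : 1 ≤ k) :
    (k : ℝ) / Real.logb 2 ((k : ℝ) + 1) ≤
      Filter.liminf (fun s : ℕ => (FB s k : ℝ) / (s : ℝ)) Filter.atTop := by
  have hlim : Filter.Tendsto
      (fun s : ℕ => (k : ℝ) / Real.logb 2 ((k : ℝ) + 1) * (1 - 1 / (s : ℝ))) Filter.atTop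
      (nhds ((k : ℝ) / Real.logb 2 ((k : ℝ) + 1))) := by
    simpa using (tendsto_one_div_atTop_nhds_zero_nat (𝕜 := ℝ)).const_sub 1 |>.const_mul
      ((k : ℝ) / Real.logb 2 ((k : ℝ) + 1))
  rw [← hlim.liminf_eq]
  refine Filter.liminf_le_liminf ?_ hlim.isBoundedUnder_ge ?_
  · filter_upwards [Filter.eventually_ge_atTop 1] with s hs using FB_div_ge s k hs hk
  · refine Filter.IsBoundedUnder.isCoboundedUnder_ge ⟨(k : ℝ), ?_⟩
    rw [Filter.eventually_map]
    filter_upwards [Filter.eventually_ge_atTop 1] with s hs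
    have hs0 : (0 : ℝ) < s := by exact_mod_cast hs
    rw [div_le_iff₀ hs0, mul_comm]
    exact_mod_cast FB_le s k
end
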